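/- arXiv:2503.08260 — 10 statements merged into one kernel-verified Lean document; each statement's English description precedes it below -/
import Mathlib

section
/- Let S be a partial spread of PG(3,q) of size q²+1−x, where 0 ≤ x ≤ q²+1. Every point of PG(3,q) that lies on a line of S lies on exactly x planes of PG(3,q) containing no line of S, and every hole of S lies on exactly q+x planes of PG(3,q) containing no line of S. -/
open scoped Classical

/-!
Let `V` have dimension `2(d + 1)` over a field with `q` elements, let `S` be a partial spread of
`(d + 1)`-dimensional subspaces (`d = 1` for lines of `PG(3, q)`), and let
`θ n = 1 + q + ⋯ + q ^ (n - 1)`. Two members of `S` span `V`, so a hyperplane contains at most one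
of them. Hence the `θ (2d + 1)` hyperplanes through a point `p` split into those containing no
member of `S` and, for each `L ∈ S`, those containing `p` and `L`, of which there are `θ (d + 1)`
if `p` lies on `L` and `θ d` otherwise. As `p` lies on at most one member of `S`, the counts follow
from `θ (2d + 1) = θ d * q ^ (d + 1) + θ (d + 1)`.
-/

/-- A coatom lies above at most one element of `S`, since any two of them join to `⊤`. -/
theorem ncard_isCoatom_and_le_eq_add_sum {α : Type*} [SemilatticeSup α] [OrderTop α] [Finite α]
    {S : Finset α} (hS : (S : Set α).Pairwise Codisjoint) (a : α) :
    {w | IsCoatom w ∧ a ≤ w}.ncard =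
      {w | IsCoatom w ∧ a ≤ w ∧ ∀ l ∈ S, ¬ l ≤ w}.ncard +
        ∑ l ∈ S, {w | IsCoatom w ∧ a ⊔ l ≤ w}.ncard := by
  have hdisj : (S : Set α).PairwiseDisjoint fun l ↦ {w | IsCoatom w ∧ a ⊔ l ≤ w} :=
    fun l hl l' hl' hne ↦ Set.disjoint_left.2 fun w hw hw' ↦
      hw.1.1 <| top_le_iff.1 <|
        hS hl hl' hne (le_sup_right.trans hw.2) (le_sup_right.trans hw'.2)
  have hunion : {w | IsCoatom w ∧ a ≤ w} \ {w | IsCoatom w ∧ a ≤ w ∧ ∀ l ∈ S, ¬ l ≤ w} =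
      ⋃ l ∈ (S : Set α), {w | IsCoatom w ∧ a ⊔ l ≤ w} := by
    ext w
    simp only [Set.mem_sdiff, Set.mem_ofPred_eq, Set.mem_iUnion, Finset.mem_coe, sup_le_iff]
    grind
  have hsub : {w | IsCoatom w ∧ a ≤ w ∧ ∀ l ∈ S, ¬ l ≤ w} ⊆ {w | IsCoatom w ∧ a ≤ w} :=
    fun w hw ↦ ⟨hw.1, hw.2.1⟩
  rw [← Set.ncard_sdiff_add_ncard_of_subset hsub, hunion,
    S.finite_toSet.ncard_biUnion (fun _ _ ↦ Set.toFinite _) hdisj,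
    finsum_mem_coe_finset, add_comm]

theorem geom_sum_two_mul_add_one {R : Type*} [CommSemiring R] (q : R) (d : ℕ) :
    ∑ i ∈ Finset.range (2 * d + 1), q ^ i =
      (∑ i ∈ Finset.range d, q ^ i) * q ^ (d + 1) + ∑ i ∈ Finset.range (d + 1), q ^ i := by
  rw [show 2 * d + 1 = (d + 1) + d by ring, Finset.sum_range_add, add_comm, Finset.sum_mul]
  simp only [pow_add, mul_comm]

section DivisionRing

variable {K V : Type*} [DivisionRing K] [AddCommGroup V] [Module K V]

theorem isAtom_point (p : Projectivization K V) : IsAtom p.submodule :=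
  Submodule.isAtom_iff_finrank_eq_one.2 p.finrank_submodule

theorem isCoatom_iff_finrank_add_one_eq [FiniteDimensional K V] {W : Submodule K V} :
    IsCoatom W ↔ Module.finrank K W + 1 = Module.finrank K V := by
  rw [← isSimpleModule_iff_isCoatom, isSimpleModule_iff_finrank_eq_one,
    ← W.finrank_quotient_add_finrank, add_comm, Nat.add_right_cancel_iff, eq_comm]

end DivisionRing

section Hyperplanes

variable {K V : Type*} [Field K] [AddCommGroup V] [Module K V] [FiniteDimensional K V]

theorem isCoatom_iff_finrank_dualAnnihilator_eq_one {W : Submodule K V} :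
    IsCoatom W ↔ Module.finrank K W.dualAnnihilator = 1 := by
  rw [← Subspace.orderIsoFiniteDimensional.isCoatom_iff, ← isAtom_dual_iff_isCoatom,
    ← Submodule.isAtom_iff_finrank_eq_one]
  rfl

/-- Taking annihilators identifies the hyperplanes with the points of the dual space. -/
theorem ncard_isCoatom [Finite K] :
    {W : Submodule K V | IsCoatom W}.ncard =
      ∑ i ∈ Finset.range (Module.finrank K V), Nat.card K ^ i := by
  rw [← Projectivization.card_of_finrank K (Module.Dual K V) Subspace.dual_finrank_eq,
    Nat.card_congr (Projectivization.equivSubmodule K (Module.Dual K V)),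
    ← Nat.card_coe_set_eq]
  exact Nat.card_congr <|
    (Subspace.orderIsoFiniteDimensional.toEquiv.trans OrderDual.ofDual).subtypeEquiv
      fun _ ↦ isCoatom_iff_finrank_dualAnnihilator_eq_one

theorem ncard_isCoatom_and_le [Finite K] (U : Submodule K V) {n : ℕ}
    (hU : Module.finrank K U + n = Module.finrank K V) :
    {W : Submodule K V | IsCoatom W ∧ U ≤ W}.ncard = ∑ i ∈ Finset.range n, Nat.card K ^ i := by
  have hcomap : {W : Submodule K V | IsCoatom W ∧ U ≤ W} =
      Submodule.comap U.mkQ '' {W | IsCoatom W} := by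
    ext W
    constructor
    · rintro ⟨hW, hUW⟩
      refine ⟨W.map U.mkQ, Submodule.isCoatom_map_of_ker_le U.mkQ_surjective ?_ hW, ?_⟩
      · rwa [Submodule.ker_mkQ]
      · rw [Submodule.comap_map_mkQ, sup_eq_right.2 hUW]
    · rintro ⟨W, hW, rfl⟩
      exact ⟨(Submodule.isCoatom_comap_iff U.mkQ_surjective).2 hW, Submodule.le_comap_mkQ U W⟩
  have hquot : Module.finrank K (V ⧸ U) = n := by
    have := U.finrank_quotient_add_finrank
    lia
  rw [hcomap, Set.ncard_image_of_injective _ (Submodule.comap_injective_of_surjective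
    U.mkQ_surjective), ncard_isCoatom, hquot]

theorem ncard_isCoatom_and_sup_le_of_disjoint [Finite K] {U L : Submodule K V} (hUL : Disjoint U L)
    {n : ℕ} (hn : Module.finrank K U + Module.finrank K L + n = Module.finrank K V) :
    {W : Submodule K V | IsCoatom W ∧ U ⊔ L ≤ W}.ncard =
      ∑ i ∈ Finset.range n, Nat.card K ^ i := by
  have hsup := Submodule.finrank_sup_add_finrank_inf_eq U L
  rw [hUL.eq_bot, finrank_bot, add_zero] at hsup
  exact ncard_isCoatom_and_le _ (by rw [hsup, hn])

end Hyperplanes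

/-- A partial `k`-spread of `V`: a set of pairwise disjoint `k`-dimensional subspaces. The partial
spreads of `PG(3, q)` are the case `k = 2`, `finrank K V = 4`. -/
structure IsPartialSpread {K V : Type*} [DivisionRing K] [AddCommGroup V] [Module K V] (k : ℕ)
    (S : Set (Submodule K V)) : Prop where
  finrank_eq : ∀ L ∈ S, Module.finrank K L = k
  pairwise_disjoint : S.Pairwise Disjoint

namespace IsPartialSpread

section DivisionRing

variable {K V : Type*} [DivisionRing K] [AddCommGroup V] [Module K V] {k : ℕ}
  {S : Set (Submodule K V)}

theorem eq_of_point_le (hS : IsPartialSpread k S) {p : Projectivization K V}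
    {L L' : Submodule K V} (hL : L ∈ S) (hL' : L' ∈ S) (hpL : p.submodule ≤ L)
    (hpL' : p.submodule ≤ L') : L = L' := by
  by_contra hne
  exact (isAtom_point p).ne_bot <| le_bot_iff.1 <| hS.pairwise_disjoint hL hL' hne hpL hpL'

theorem pairwise_codisjoint [FiniteDimensional K V] (hS : IsPartialSpread k S)
    (hV : Module.finrank K V ≤ 2 * k) : S.Pairwise Codisjoint :=
  fun L hL L' hL' hne ↦ codisjoint_iff.2 <| Submodule.eq_top_of_disjoint L L'
    (by rw [hS.finrank_eq L hL, hS.finrank_eq L' hL']; lia) (hS.pairwise_disjoint hL hL' hne)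

end DivisionRing

section Counting

variable {K V : Type*} [Field K] [Finite K] [AddCommGroup V] [Module K V] {d : ℕ}
  {S : Finset (Submodule K V)}

theorem ncard_avoiding_add_sum (hS : IsPartialSpread (d + 1) (S : Set (Submodule K V)))
    (hV : Module.finrank K V = 2 * (d + 1)) (p : Projectivization K V) :
    {W | IsCoatom W ∧ p.submodule ≤ W ∧ ∀ L ∈ S, ¬ L ≤ W}.ncard +
        ∑ L ∈ S, {W | IsCoatom W ∧ p.submodule ⊔ L ≤ W}.ncard =
      (∑ i ∈ Finset.range d, Nat.card K ^ i) * Nat.card K ^ (d + 1) +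
        ∑ i ∈ Finset.range (d + 1), Nat.card K ^ i := by
  have : FiniteDimensional K V := .of_finrank_pos (by lia)
  have : Finite V := Module.finite_of_finite K
  rw [← ncard_isCoatom_and_le_eq_add_sum (hS.pairwise_codisjoint hV.le), ← geom_sum_two_mul_add_one]
  exact ncard_isCoatom_and_le _ (by rw [p.finrank_submodule]; lia)

theorem ncard_isCoatom_and_point_sup_le (hS : IsPartialSpread (d + 1) (S : Set (Submodule K V)))
    (hV : Module.finrank K V = 2 * (d + 1)) {p : Projectivization K V} {L : Submodule K V}
    (hL : L ∈ S) (hp : ¬ p.submodule ≤ L) :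
    {W | IsCoatom W ∧ p.submodule ⊔ L ≤ W}.ncard = ∑ i ∈ Finset.range d, Nat.card K ^ i := by
  have : FiniteDimensional K V := .of_finrank_pos (by lia)
  exact ncard_isCoatom_and_sup_le_of_disjoint ((isAtom_point p).not_le_iff_disjoint.1 hp)
    (by rw [p.finrank_submodule, hS.finrank_eq L hL]; lia)

theorem ncard_avoiding_of_covered (hS : IsPartialSpread (d + 1) (S : Set (Submodule K V)))
    (hV : Module.finrank K V = 2 * (d + 1)) {p : Projectivization K V} {L₀ : Submodule K V}
    (hL₀ : L₀ ∈ S) (hp : p.submodule ≤ L₀) :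
    {W | IsCoatom W ∧ p.submodule ≤ W ∧ ∀ L ∈ S, ¬ L ≤ W}.ncard +
        S.card * ∑ i ∈ Finset.range d, Nat.card K ^ i =
      (Nat.card K ^ (d + 1) + 1) * ∑ i ∈ Finset.range d, Nat.card K ^ i := by
  have : FiniteDimensional K V := .of_finrank_pos (by lia)
  have hthrough : {W | IsCoatom W ∧ p.submodule ⊔ L₀ ≤ W}.ncard =
      ∑ i ∈ Finset.range (d + 1), Nat.card K ^ i := by
    rw [sup_eq_right.2 hp]
    exact ncard_isCoatom_and_le L₀ (by rw [hS.finrank_eq L₀ hL₀]; lia)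
  have hothers : ∀ L ∈ S.erase L₀, {W | IsCoatom W ∧ p.submodule ⊔ L ≤ W}.ncard =
      ∑ i ∈ Finset.range d, Nat.card K ^ i := by
    intro L hL
    obtain ⟨hne, hLS⟩ := Finset.mem_erase.1 hL
    exact hS.ncard_isCoatom_and_point_sup_le hV hLS
      fun hpL ↦ hne (hS.eq_of_point_le hLS hL₀ hpL hp)
  have hcount := hS.ncard_avoiding_add_sum hV p
  rw [← Finset.add_sum_erase S _ hL₀, hthrough, Finset.sum_congr rfl hothers,
    Finset.sum_const, smul_eq_mul] at hcount
  rw [← Finset.card_erase_add_one hL₀]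
  linarith

theorem ncard_avoiding_of_hole (hS : IsPartialSpread (d + 1) (S : Set (Submodule K V)))
    (hV : Module.finrank K V = 2 * (d + 1)) {p : Projectivization K V}
    (hp : ∀ L ∈ S, ¬ p.submodule ≤ L) :
    {W | IsCoatom W ∧ p.submodule ≤ W ∧ ∀ L ∈ S, ¬ L ≤ W}.ncard +
        S.card * ∑ i ∈ Finset.range d, Nat.card K ^ i =
      Nat.card K ^ d + (Nat.card K ^ (d + 1) + 1) * ∑ i ∈ Finset.range d, Nat.card K ^ i := by
  have hcount := hS.ncard_avoiding_add_sum hV p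
  rw [Finset.sum_congr rfl fun L hL ↦ hS.ncard_isCoatom_and_point_sup_le hV hL (hp L hL),
    Finset.sum_const, smul_eq_mul, Finset.sum_range_succ] at hcount
  linarith

end Counting

end IsPartialSpread

theorem stmt_2_general {K V : Type*} [Field K] [Finite K] [AddCommGroup V] [Module K V] {d x : ℕ}
    (hV : Module.finrank K V = 2 * (d + 1)) {S : Set (Submodule K V)}
    (hS : IsPartialSpread (d + 1) S) (hS_card : S.ncard + x = Nat.card K ^ (d + 1) + 1) :
    (∀ p : Projectivization K V, (∃ L ∈ S, p.submodule ≤ L) →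
      {W | IsCoatom W ∧ p.submodule ≤ W ∧ ∀ L ∈ S, ¬ L ≤ W}.ncard =
        x * ∑ i ∈ Finset.range d, Nat.card K ^ i) ∧
    (∀ p : Projectivization K V, (∀ L ∈ S, ¬ p.submodule ≤ L) →
      {W | IsCoatom W ∧ p.submodule ≤ W ∧ ∀ L ∈ S, ¬ L ≤ W}.ncard =
        Nat.card K ^ d + x * ∑ i ∈ Finset.range d, Nat.card K ^ i) := by
  have : FiniteDimensional K V := .of_finrank_pos (by lia)
  have : Finite V := Module.finite_of_finite K
  lift S to Finset (Submodule K V) using S.toFinite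
  rw [Set.ncard_coe_finset] at hS_card
  refine ⟨fun p ⟨L₀, hL₀, hp⟩ ↦ ?_, fun p hp ↦ ?_⟩
  · have hcount := hS.ncard_avoiding_of_covered hV hL₀ hp
    rw [← hS_card, add_mul] at hcount
    exact Nat.add_right_cancel (hcount.trans (by ring))
  · have hcount := hS.ncard_avoiding_of_hole hV hp
    rw [← hS_card, add_mul] at hcount
    exact Nat.add_right_cancel (hcount.trans (by ring))

/-- Let S be a partial spread of PG(3,q) of size q²+1−x. Every point lying on a
line of S lies on exactly x planes containing no line of S, and every hole of S
lies on exactly q+x planes containing no line of S. -/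
theorem stmt_2 (F : Type*) [Field F] [Fintype F] (q : ℕ) (hq : q = Fintype.card F)
    (x : ℕ) (hx : x ≤ q ^ 2 + 1)
    (S : Set (Submodule F (Fin 4 → F)))
    (hS_line : ∀ L ∈ S, Module.finrank F L = 2)
    (hS_disj : ∀ L ∈ S, ∀ L' ∈ S, L ≠ L' → L ⊓ L' = ⊥)
    (hS_card : S.ncard = q ^ 2 + 1 - x) :
    (∀ p : Projectivization F (Fin 4 → F), (∃ L ∈ S, p.submodule ≤ L) →
      {W : Submodule F (Fin 4 → F) |
        Module.finrank F W = 3 ∧ p.submodule ≤ W ∧ ∀ L ∈ S, ¬ L ≤ W}.ncard = x) ∧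
    (∀ p : Projectivization F (Fin 4 → F), (∀ L ∈ S, ¬ p.submodule ≤ L) →
      {W : Submodule F (Fin 4 → F) |
        Module.finrank F W = 3 ∧ p.submodule ≤ W ∧ ∀ L ∈ S, ¬ L ≤ W}.ncard = q + x) := by
  simpa [isCoatom_iff_finrank_add_one_eq, hq] using stmt_2_general (d := 1) (by simp)
    ⟨hS_line, fun L hL L' hL' hne ↦ disjoint_iff.2 (hS_disj L hL L' hL' hne)⟩
    (x := x) (by rw [hS_card, Nat.card_eq_fintype_card, ← hq]; lia)
end

section
/- Let F ⊆ K be finite fields with K of degree 2 over F, and set q = |F| (so |K| = q²). Let B be the Baer subgeometry of PG(3,q²): the set of points of the projectivization of K⁴ admitting a nonzero representative vector all of whose coordinates lie in the image of F in K. Then every plane of PG(3,q²) contains exactly q+1 or exactly q²+q+1 points of B. -/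
open scoped Classical

/-- The Baer subgeometry of PG(3,|K|) determined by the subfield F of K: the set
of points of the projectivization of K⁴ admitting a nonzero representative
vector all of whose coordinates lie in the image of F in K. -/
def BaerSubgeometry (F K : Type*) [Field F] [Field K] [Algebra F K] :
    Set (Projectivization K (Fin 4 → K)) :=
  {p | ∃ (v : Fin 4 → K) (hv : v ≠ 0),
    (∀ i, v i ∈ Set.range (algebraMap F K)) ∧ p = Projectivization.mk K v hv}

/-!
The points of the subgeometry on a `K`-subspace `W` of `K^ι` correspond to the points of the
projective space of the `F`-space `W ∩ F^ι`, so only its dimension matters. Vectors of `F^ι`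
independent over `F` stay independent over `K`, whence `dim_F (W ∩ F^ι) ≤ dim_K W`; and `W ∩ F^ι`
is the kernel of an `F`-linear map `F^ι → K^ι / W`, so its codimension in `F^ι` is at most
`[K : F] * dim_K (K^ι / W)`. For a plane and `[K : F] = 2` this leaves dimensions `2` and `3`.
-/

section Subspaces

open Module

variable {F K ι : Type*} [Field F] [Field K] [Algebra F K]

variable (F) in
/-- The `F`-subspace `W ∩ F^ι` of `F^ι` cut out by a `K`-subspace `W` of `K^ι`, where `F^ι` is
embedded in `K^ι` coordinatewise. -/
def rationalVectors (W : Submodule K (ι → K)) : Submodule F (ι → F) :=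
  (W.restrictScalars F).comap (Pi.algebraMap ι F K)

theorem finrank_rationalVectors_le [Finite ι] (W : Submodule K (ι → K)) :
    finrank F (rationalVectors F W) ≤ finrank K W := by
  let b := finBasis F (rationalVectors F W)
  have hb : LinearIndependent F fun j ↦ (b j : ι → F) :=
    b.linearIndependent.map' (rationalVectors F W).subtype (Submodule.ker_subtype _)
  have hbK : LinearIndependent K fun j ↦ algebraMap F K ∘ (b j : ι → F) :=
    linearIndependent_algebraMap_comp_iff.mpr hb
  have hbW : Set.range (fun j ↦ algebraMap F K ∘ (b j : ι → F)) ⊆ W :=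
    Set.range_subset_iff.mpr fun j ↦ (b j).2
  calc
    finrank F (rationalVectors F W)
        = finrank K (Submodule.span K (Set.range fun j ↦ algebraMap F K ∘ (b j : ι → F))) := by
      rw [finrank_span_eq_card hbK, Fintype.card_fin]
    _ ≤ finrank K W := Submodule.finrank_mono (Submodule.span_le.mpr hbW)

theorem card_le_finrank_rationalVectors_add [Fintype ι] [FiniteDimensional F K]
    (W : Submodule K (ι → K)) :
    Fintype.card ι ≤
      finrank F (rationalVectors F W) + finrank F K * finrank K ((ι → K) ⧸ W) := by
  let toQuotient : (ι → F) →ₗ[F] (ι → K) ⧸ W :=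
    W.mkQ.restrictScalars F ∘ₗ Pi.algebraMap ι F K
  have hker : LinearMap.ker toQuotient = rationalVectors F W :=
    Submodule.ext fun _ ↦ Submodule.Quotient.mk_eq_zero W
  have : Module.Finite F ((ι → K) ⧸ W) := .trans K _
  calc
    Fintype.card ι
        = finrank F (LinearMap.ker toQuotient) + finrank F (LinearMap.range toQuotient) := by
      rw [add_comm, toQuotient.finrank_range_add_finrank_ker, finrank_fintype_fun_eq_card]
    _ ≤ finrank F (rationalVectors F W) + finrank F ((ι → K) ⧸ W) := by
      rw [hker]
      gcongr
      exact Submodule.finrank_le _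
    _ = finrank F (rationalVectors F W) + finrank F K * finrank K ((ι → K) ⧸ W) := by
      rw [finrank_mul_finrank]

end Subspaces

section Points

open Projectivization
open scoped LinearAlgebra.Projectivization

theorem ncard_projectivization {k V : Type*} [Field k] [Finite k] [AddCommGroup V] [Module k V]
    (U : Submodule k V) :
    (U.projectivization : Set (ℙ k V)).ncard =
      ∑ i ∈ Finset.range (Module.finrank k U), Nat.card k ^ i := by
  let incl : ℙ k U → ℙ k V := Projectivization.map U.subtype U.injective_subtype
  have hrange : Set.range incl = U.projectivization := by
    ext p
    constructor
    · rintro ⟨x, rfl⟩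
      induction x with | h u => exact u.2
    · induction p with | h v hv =>
      exact fun hvU ↦ ⟨mk k ⟨v, hvU⟩ (by simpa [Subtype.ext_iff] using hv), rfl⟩
  rw [← hrange, ← Nat.card_coe_set_eq, Nat.card_range_of_injective (map_injective _ _),
    card_of_finrank k U rfl]

variable (F K ι : Type*) [Field F] [Field K] [Algebra F K]

/-- The subgeometry `PG(ι, F)` of `PG(ι, K)` formed by the points with homogeneous coordinates
in `F`; for `ι = Fin 4` it is definitionally `BaerSubgeometry F K`. -/
def canonicalSubgeometry : Set (ℙ K (ι → K)) :=
  {p | ∃ (v : ι → K) (hv : v ≠ 0),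
    (∀ i, v i ∈ Set.range (algebraMap F K)) ∧ p = mk K v hv}

/-- The map `PG(ι, F) → PG(ι, K)` reading homogeneous coordinates over `F` as coordinates
over `K`. -/
def subgeometryEmbedding : ℙ F (ι → F) → ℙ K (ι → K) :=
  Projectivization.map (σ := algebraMap F K)
    { Pi.algebraMap ι F K with
      map_smul' := fun c v ↦ funext fun i ↦ map_mul (algebraMap F K) c (v i) }
    (algebraMap F K).injective.comp_left

theorem range_subgeometryEmbedding :
    Set.range (subgeometryEmbedding F K ι) = canonicalSubgeometry F K ι := by
  ext p
  constructor
  · rintro ⟨x, rfl⟩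
    induction x with | h u hu => exact ⟨_, _, fun i ↦ ⟨u i, rfl⟩, rfl⟩
  · rintro ⟨v, hv, hvF, rfl⟩
    choose u hu using hvF
    obtain rfl : algebraMap F K ∘ u = v := funext hu
    have hu0 : u ≠ 0 := by
      rintro rfl
      exact hv (map_zero (Pi.algebraMap ι F K))
    exact ⟨mk F u hu0, rfl⟩

theorem subgeometryEmbedding_injective [Finite ι] :
    Function.Injective (subgeometryEmbedding F K ι) := by
  intro x y
  induction x with | h u hu =>
  induction y with | h v hv =>
  contrapose!
  rw [← independent_pair_iff_ne, ← independent_pair_iff_ne, independent_mk_iff_LinearIndependent]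
  intro huv
  have hpair : (fun i ↦ algebraMap F K ∘ ![u, v] i) = ![algebraMap F K ∘ u, algebraMap F K ∘ v] :=
    funext (Fin.forall_fin_two.mpr ⟨rfl, rfl⟩)
  exact (independent_mk_iff_LinearIndependent _ _).mpr
    (hpair ▸ linearIndependent_algebraMap_comp_iff.mpr huv)

variable {K ι}

theorem subgeometryEmbedding_preimage_projectivization (W : Submodule K (ι → K)) :
    subgeometryEmbedding F K ι ⁻¹' W.projectivization = (rationalVectors F W).projectivization := by
  ext x
  induction x with | h u hu => rfl

theorem ncard_canonicalSubgeometry_submodule_le [Finite F] [Finite ι] (W : Submodule K (ι → K)) :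
    {p ∈ canonicalSubgeometry F K ι | p.submodule ≤ W}.ncard =
      ∑ i ∈ Finset.range (Module.finrank F (rationalVectors F W)), Nat.card F ^ i := by
  have himage : {p ∈ canonicalSubgeometry F K ι | p.submodule ≤ W} =
      subgeometryEmbedding F K ι '' (rationalVectors F W).projectivization := by
    simp only [← W.mem_projectivization_iff_submodule_le]
    rw [← subgeometryEmbedding_preimage_projectivization, Set.image_preimage_eq_range_inter,
      range_subgeometryEmbedding]
    rfl
  rw [himage, Set.ncard_image_of_injective _ (subgeometryEmbedding_injective F K ι),
    ncard_projectivization]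

end Points

theorem stmt_9_general (F K ι : Type*) [Field F] [Field K] [Finite F] [Fintype ι]
    [Algebra F K] [FiniteDimensional F K] (W : Submodule K (ι → K)) :
    ∃ k ≤ Module.finrank K W,
      Fintype.card ι ≤ k + Module.finrank F K * Module.finrank K ((ι → K) ⧸ W) ∧
      {p ∈ canonicalSubgeometry F K ι | p.submodule ≤ W}.ncard =
        ∑ i ∈ Finset.range k, Nat.card F ^ i :=
  ⟨Module.finrank F (rationalVectors F W), finrank_rationalVectors_le W,
    card_le_finrank_rationalVectors_add W, ncard_canonicalSubgeometry_submodule_le F W⟩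

/-- Every plane of PG(3,q²) contains exactly q+1 or exactly q²+q+1 points of the
Baer subgeometry PG(3,q). -/
theorem stmt_9 (F K : Type*) [Field F] [Field K] [Fintype F] [Fintype K]
    [Algebra F K] (hdeg : Module.finrank F K = 2)
    (q : ℕ) (hq : q = Fintype.card F)
    (W : Submodule K (Fin 4 → K)) (hW : Module.finrank K W = 3) :
    {p ∈ BaerSubgeometry F K | p.submodule ≤ W}.ncard = q + 1 ∨
    {p ∈ BaerSubgeometry F K | p.submodule ≤ W}.ncard = q ^ 2 + q + 1 := by
  obtain ⟨k, hk_le, hk_ge, hcard⟩ := stmt_9_general F K (Fin 4) W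
  have hcodim := W.finrank_quotient_add_finrank
  rw [Module.finrank_fin_fun] at hcodim
  rw [Fintype.card_fin, hdeg] at hk_ge
  have hF : Nat.card F = q := Nat.card_eq_fintype_card.trans hq.symm
  obtain rfl | rfl : k = 2 ∨ k = 3 := by lia
  · exact .inl (hcard.trans (by simp only [Finset.sum_range_succ, Finset.sum_range_zero, hF]; ring))
  · exact .inr (hcard.trans (by simp only [Finset.sum_range_succ, Finset.sum_range_zero, hF]; ring))
end

section
/- Let F ⊆ K be finite fields with K of degree 2 over F, set q = |F|, and let B be the Baer subgeometry of PG(3,q²) determined by F. Call a plane of PG(3,q²) a Baer plane if it contains exactly q²+q+1 points of B. Then every point of B lies on exactly q²+q+1 Baer planes, and every point of PG(3,q²) not in B lies on exactly q+1 Baer planes. -/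
open scoped Classical

/-! The dot product is a polarity of `PG(n, K)`: every hyperplane is `p^⊥` for a unique point `p`.
Let `r` be the dimension over `F` of the span of the coordinates of `p`, which is unchanged by
scaling.  The `F`-rational points of `p^⊥` are the `F`-linear relations among these coordinates,
so by rank-nullity they form a `PG(n - r, F)`.  As `r = 1` exactly when `p` is rational, the
hyperplanes with the maximal number of rational points are those polar to rational points.
By the symmetry of polarity, such hyperplanes through `p` correspond to the rational points of
`p^⊥`, which have just been counted.  For a quadratic extension `r` is `1` or `2`. -/

open Module
open scoped LinearAlgebra.Projectivization

theorem ncard_submodule_le {F V : Type*} [Field F] [Finite F] [AddCommGroup V] [Module F V]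
    (U : Submodule F V) :
    {x : ℙ F V | x.submodule ≤ U}.ncard = ∑ i ∈ Finset.range (finrank F U), Nat.card F ^ i := by
  have range_map_subtype : Set.range (Projectivization.map U.subtype U.injective_subtype) =
      {x : ℙ F V | x.submodule ≤ U} := by
    ext x
    induction x using Projectivization.ind with | h v hv
    simp only [Set.mem_ofPred_eq, Projectivization.submodule_mk,
      Submodule.span_singleton_le_iff_mem]
    constructor
    · rintro ⟨y, hy⟩
      induction y using Projectivization.ind with | h u hu
      rw [Projectivization.map_mk, Projectivization.mk_eq_mk_iff'] at hy
      obtain ⟨a, ha⟩ := hy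
      have hav : a • v ∈ U := ha ▸ u.2
      refine (U.smul_mem_iff ?_).1 hav
      rintro rfl
      exact hu (Subtype.ext (by simpa using ha.symm))
    · exact fun hvU ↦ ⟨.mk F ⟨v, hvU⟩ (by simpa using hv), rfl⟩
  rw [← range_map_subtype, Set.ncard_range_of_injective (Projectivization.map_injective _ _),
    Projectivization.card_of_finrank F U rfl]

section Polarity

variable {K V : Type*} [Field K] [AddCommGroup V] [Module K V] (B : LinearMap.BilinForm K V)

/-- The polar of a projective point with respect to a bilinear form: the subspace orthogonal to
it, which is a hyperplane when the form is nondegenerate. -/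
def polar (p : ℙ K V) : Submodule K V :=
  B.orthogonal p.submodule

variable {B}

theorem submodule_le_polar_comm (hB : B.IsRefl) {p r : ℙ K V} :
    r.submodule ≤ polar B p ↔ p.submodule ≤ polar B r :=
  ⟨fun h v hv _ hw ↦ hB _ _ (h hw v hv), fun h v hv _ hw ↦ hB _ _ (h hw v hv)⟩

variable [FiniteDimensional K V]

theorem polar_injective (hB : B.Nondegenerate) (hB' : B.IsRefl) :
    Function.Injective (polar B) :=
  (Function.LeftInverse.injective (LinearMap.BilinForm.orthogonal_orthogonal hB hB')).comp
    Projectivization.submodule_injective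

theorem range_polar (hB : B.Nondegenerate) (hB' : B.IsRefl) :
    Set.range (polar B) = {W : Submodule K V | finrank K W + 1 = finrank K V} := by
  ext W
  constructor
  · rintro ⟨p, rfl⟩
    have hle := p.submodule.finrank_le
    have hpolar : finrank K (polar B p) = finrank K V - finrank K p.submodule :=
      LinearMap.BilinForm.finrank_orthogonal hB p.submodule
    rw [p.finrank_submodule] at hle hpolar
    rw [Set.mem_ofPred_eq, hpolar, Nat.sub_add_cancel hle]
  · intro (hW : finrank K W + 1 = finrank K V)
    have hW' : finrank K (B.orthogonal W) = 1 := by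
      rw [LinearMap.BilinForm.finrank_orthogonal hB]
      lia
    refine ⟨.mk'' _ hW', ?_⟩
    rw [polar, Projectivization.submodule_mk'',
      LinearMap.BilinForm.orthogonal_orthogonal hB hB']

end Polarity

section DotProduct

variable {ι : Type*} [Fintype ι]

theorem dotProductBilin_isRefl (R : Type*) [CommSemiring R] :
    (dotProductBilin R R : LinearMap.BilinForm R (ι → R)).IsRefl :=
  fun v w h ↦ (dotProduct_comm w v).trans h

theorem dotProductBilin_nondegenerate (R : Type*) [CommRing R] :
    (dotProductBilin R R : LinearMap.BilinForm R (ι → R)).Nondegenerate :=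
  (dotProductBilin_isRefl R).nondegenerate_iff_separatingLeft.2 fun v hv ↦
    dotProduct_eq_zero v hv

theorem mk_submodule_le_polar_mk {K : Type*} [Field K] {v w : ι → K} (hv : v ≠ 0) (hw : w ≠ 0) :
    (Projectivization.mk K w hw).submodule ≤ polar (dotProductBilin K K) (.mk K v hv) ↔
      v ⬝ᵥ w = 0 := by
  rw [polar, Projectivization.submodule_mk, Projectivization.submodule_mk,
    Submodule.span_singleton_le_iff_mem, LinearMap.BilinForm.mem_orthogonal_iff]
  refine ⟨fun h ↦ h v (Submodule.mem_span_singleton_self v), fun h u hu ↦ ?_⟩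
  obtain ⟨a, rfl⟩ := Submodule.mem_span_singleton.1 hu
  change (a • v) ⬝ᵥ w = 0
  rw [smul_dotProduct, h, smul_zero]

end DotProduct

section RationalPoints

variable (F K : Type*) [Field F] [Field K] [Algebra F K] (ι : Type*)

/-- The coordinatewise embedding of `Fⁿ` into `Kⁿ`, semilinear over `F → K` so that it induces a
map of projective spaces. -/
def coordEmbedding : (ι → F) →ₛₗ[algebraMap F K] (ι → K) where
  toFun x i := algebraMap F K (x i)
  map_add' x y := funext fun i ↦ map_add (algebraMap F K) (x i) (y i)
  map_smul' c x := funext fun i ↦ map_mul (algebraMap F K) c (x i)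

theorem coordEmbedding_injective : Function.Injective (coordEmbedding F K ι) :=
  (algebraMap F K).injective.comp_left

/-- The embedding of `PG(n, F)` into `PG(n, K)` as a subgeometry. -/
def extendScalars : ℙ F (ι → F) → ℙ K (ι → K) :=
  Projectivization.map (coordEmbedding F K ι) (coordEmbedding_injective F K ι)

theorem extendScalars_injective : Function.Injective (extendScalars F K ι) := by
  intro p r hpr
  induction p using Projectivization.ind with | h x hx
  induction r using Projectivization.ind with | h y hy
  obtain ⟨a, ha⟩ := (Projectivization.mk_eq_mk_iff' ..).1 hpr
  have ha_apply (j) : a * algebraMap F K (y j) = algebraMap F K (x j) := congrFun ha j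
  obtain ⟨i, hi : y i ≠ 0⟩ := Function.ne_iff.1 hy
  have ha_rational : algebraMap F K (x i / y i) = a := by
    rw [map_div₀, ← ha_apply, mul_div_cancel_right₀ _ (by simpa using hi)]
  refine (Projectivization.mk_eq_mk_iff' ..).2 ⟨x i / y i, coordEmbedding_injective F K ι ?_⟩
  rw [map_smulₛₗ, ha_rational, ha]

/-- The points of `PG(n, K)` with a representative over `F`: the subgeometry determined by `F`,
in the dimension given by the index type `ι` of the coordinates. -/
def rationalPoints : Set (ℙ K (ι → K)) :=
  Set.range (extendScalars F K ι)

theorem baerSubgeometry_eq_rationalPoints :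
    BaerSubgeometry F K = rationalPoints F K (Fin 4) := by
  ext p
  constructor
  · rintro ⟨_, hv, hrat, rfl⟩
    choose x hx using hrat
    obtain rfl : coordEmbedding F K (Fin 4) x = _ := funext hx
    exact ⟨.mk F x fun h0 ↦ hv (by rw [h0, map_zero]), rfl⟩
  · rintro ⟨x, rfl⟩
    induction x using Projectivization.ind with | h x hx
    exact ⟨_, _, fun i ↦ ⟨x i, rfl⟩, rfl⟩

end RationalPoints

section CoordRank

variable (F : Type*) {K : Type*} [Field F] [Field K] [Algebra F K] {ι : Type*}

/-- The dimension over `F` of the span of the homogeneous coordinates of a point.  It measures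
how far the point is from being `F`-rational, and by `coordRank_mk` it can be computed from any
representative. -/
noncomputable def coordRank (p : ℙ K (ι → K)) : ℕ :=
  finrank F (Submodule.span F (Set.range p.rep))

theorem coordRank_mk (v : ι → K) (hv : v ≠ 0) :
    coordRank F (.mk K v hv) = finrank F (Submodule.span F (Set.range v)) := by
  obtain ⟨a, ha⟩ := Projectivization.exists_smul_eq_mk_rep K v hv
  let scale : K ≃ₗ[F] K := DistribMulAction.toLinearEquiv F K a
  have range_rep : Set.range (Projectivization.mk K v hv).rep = scale '' Set.range v := by
    rw [← ha, ← Set.range_comp]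
    rfl
  rw [coordRank, range_rep, ← LinearEquiv.coe_coe, ← Submodule.map_span,
    LinearEquiv.finrank_map_eq]

variable {F}

theorem coordRank_le_finrank [FiniteDimensional F K] (p : ℙ K (ι → K)) :
    coordRank F p ≤ finrank F K :=
  Submodule.finrank_le _

theorem coordRank_le_card [Fintype ι] (p : ℙ K (ι → K)) : coordRank F p ≤ Fintype.card ι :=
  finrank_range_le_card p.rep

variable [Finite ι]

theorem coordRank_pos (p : ℙ K (ι → K)) : 0 < coordRank F p := by
  obtain ⟨i, hi⟩ := Function.ne_iff.1 p.rep_nonzero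
  have := FiniteDimensional.span_of_finite F (Set.finite_range p.rep)
  exact Submodule.one_le_finrank_iff.2 <| (Submodule.ne_bot_iff _).2
    ⟨p.rep i, Submodule.subset_span ⟨i, rfl⟩, hi⟩

theorem coordRank_eq_one_iff {p : ℙ K (ι → K)} :
    coordRank F p = 1 ↔ p ∈ rationalPoints F K ι := by
  constructor
  · intro h
    obtain ⟨⟨c, _⟩, -, hc⟩ := finrank_eq_one_iff'.1 h
    choose x hx using fun i ↦ hc ⟨p.rep i, Submodule.subset_span ⟨i, rfl⟩⟩
    have hrep : c • coordEmbedding F K ι x = p.rep := by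
      ext i
      have hxi : x i • c = p.rep i := congrArg Subtype.val (hx i)
      rw [← hxi, Algebra.smul_def (x i) c]
      exact mul_comm c (algebraMap F K (x i))
    have hx0 : x ≠ 0 := by
      rintro rfl
      exact p.rep_nonzero (by rw [← hrep, map_zero, smul_zero])
    refine ⟨.mk F x hx0, ?_⟩
    rw [← p.mk_rep]
    exact ((Projectivization.mk_eq_mk_iff' ..).2 ⟨c, hrep⟩).symm
  · rintro ⟨x, rfl⟩
    refine le_antisymm ?_ (coordRank_pos _)
    induction x using Projectivization.ind with | h x hx
    rw [extendScalars, Projectivization.map_mk, coordRank_mk,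
      ← finrank_span_singleton (K := F) (one_ne_zero (α := K))]
    apply Submodule.finrank_mono
    rw [Submodule.span_le]
    rintro _ ⟨i, rfl⟩
    exact Submodule.mem_span_singleton.2 ⟨x i, (Algebra.algebraMap_eq_smul_one _).symm⟩

theorem coordRank_eq_two_of_notMem (hdeg : finrank F K = 2) {p : ℙ K (ι → K)}
    (hp : p ∉ rationalPoints F K ι) : coordRank F p = 2 := by
  have : FiniteDimensional F K := .of_finrank_pos (by lia)
  have hne := mt coordRank_eq_one_iff.1 hp
  have hpos := coordRank_pos (F := F) p
  have hle := coordRank_le_finrank (F := F) p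
  lia

end CoordRank

section Counting

variable (F : Type*) {K : Type*} [Field F] [Field K] [Algebra F K] {ι : Type*} [Fintype ι]

theorem finrank_ker_linearCombination (v : ι → K) (hv : v ≠ 0) :
    finrank F (Fintype.linearCombination F v).ker =
      Fintype.card ι - coordRank F (.mk K v hv) := by
  have rank_nullity := (Fintype.linearCombination F v).finrank_range_add_finrank_ker
  rw [Fintype.range_linearCombination, ← coordRank_mk F v hv, finrank_fintype_fun_eq_card]
    at rank_nullity
  lia

theorem extendScalars_submodule_le_polar_mk (x : ℙ F (ι → F)) (v : ι → K) (hv : v ≠ 0) :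
    (extendScalars F K ι x).submodule ≤ polar (dotProductBilin K K) (.mk K v hv) ↔
      x.submodule ≤ (Fintype.linearCombination F v).ker := by
  induction x using Projectivization.ind with | h x hx
  rw [extendScalars, Projectivization.map_mk, mk_submodule_le_polar_mk,
    Projectivization.submodule_mk, Submodule.span_singleton_le_iff_mem, LinearMap.mem_ker,
    Fintype.linearCombination_apply]
  simp only [dotProduct, coordEmbedding, LinearMap.coe_mk, AddHom.coe_mk, Algebra.smul_def,
    mul_comm]

variable [Finite F]

theorem ncard_rationalPoints_le_polar (p : ℙ K (ι → K)) :
    {r ∈ rationalPoints F K ι | r.submodule ≤ polar (dotProductBilin K K) p}.ncard =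
      ∑ i ∈ Finset.range (Fintype.card ι - coordRank F p), Nat.card F ^ i := by
  induction p using Projectivization.ind with | h v hv
  have rational_eq_image :
      {r ∈ rationalPoints F K ι | r.submodule ≤ polar (dotProductBilin K K) (.mk K v hv)} =
        extendScalars F K ι '' {x | x.submodule ≤ (Fintype.linearCombination F v).ker} := by
    simp only [← extendScalars_submodule_le_polar_mk F _ v hv]
    exact Set.image_preimage_eq_range_inter.symm
  rw [rational_eq_image, Set.ncard_image_of_injective _ (extendScalars_injective F K ι),
    ncard_submodule_le, finrank_ker_linearCombination]

theorem ncard_rationalPoints_le_polar_eq_iff {n : ℕ} {p : ℙ K (Fin (n + 1) → K)} :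
    {r ∈ rationalPoints F K (Fin (n + 1)) |
        r.submodule ≤ polar (dotProductBilin K K) p}.ncard =
      ∑ i ∈ Finset.range n, Nat.card F ^ i ↔ p ∈ rationalPoints F K (Fin (n + 1)) := by
  have geom_sum_strictMono : StrictMono fun m ↦ ∑ i ∈ Finset.range m, Nat.card F ^ i :=
    strictMono_nat_of_lt_succ fun m ↦ by
      rw [Finset.sum_range_succ]
      exact Nat.lt_add_of_pos_right (pow_pos Nat.card_pos m)
  have hpos := coordRank_pos (F := F) p
  have hle := coordRank_le_card (F := F) p
  rw [Fintype.card_fin] at hle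
  rw [ncard_rationalPoints_le_polar, geom_sum_strictMono.injective.eq_iff, Fintype.card_fin,
    ← coordRank_eq_one_iff]
  lia

theorem stmt_10_general {n : ℕ} (p : ℙ K (Fin (n + 1) → K)) :
    {W : Submodule K (Fin (n + 1) → K) | finrank K W = n ∧
      {r ∈ rationalPoints F K (Fin (n + 1)) | r.submodule ≤ W}.ncard =
        ∑ i ∈ Finset.range n, Nat.card F ^ i ∧
      p.submodule ≤ W}.ncard =
    ∑ i ∈ Finset.range (n + 1 - coordRank F p), Nat.card F ^ i := by
  have hrefl := dotProductBilin_isRefl K (ι := Fin (n + 1))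
  have hnondeg := dotProductBilin_nondegenerate K (ι := Fin (n + 1))
  have hyperplane_iff (W : Submodule K (Fin (n + 1) → K)) :
      finrank K W = n ↔ W ∈ Set.range (polar (dotProductBilin K K)) := by
    simp [range_polar hnondeg hrefl]
  have planes_eq_image :
      {W : Submodule K (Fin (n + 1) → K) | finrank K W = n ∧
        {r ∈ rationalPoints F K (Fin (n + 1)) | r.submodule ≤ W}.ncard =
          ∑ i ∈ Finset.range n, Nat.card F ^ i ∧
        p.submodule ≤ W} =
      polar (dotProductBilin K K) '' {r ∈ rationalPoints F K (Fin (n + 1)) |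
        r.submodule ≤ polar (dotProductBilin K K) p} := by
    ext W
    simp only [Set.mem_ofPred_eq, Set.mem_image, hyperplane_iff]
    constructor
    · rintro ⟨⟨r, rfl⟩, hcount, hp⟩
      exact ⟨r, ⟨(ncard_rationalPoints_le_polar_eq_iff F).1 hcount,
        (submodule_le_polar_comm hrefl).1 hp⟩, rfl⟩
    · rintro ⟨r, ⟨hr, hrp⟩, rfl⟩
      exact ⟨⟨r, rfl⟩, (ncard_rationalPoints_le_polar_eq_iff F).2 hr,
        (submodule_le_polar_comm hrefl).1 hrp⟩
  rw [planes_eq_image, Set.ncard_image_of_injective _ (polar_injective hnondeg hrefl),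
    ncard_rationalPoints_le_polar, Fintype.card_fin]

end Counting

/-- Call a plane of PG(3,q²) a Baer plane if it contains exactly q²+q+1 points
of the Baer subgeometry B. Every point of B lies on exactly q²+q+1 Baer planes,
and every point not in B lies on exactly q+1 Baer planes. -/
theorem stmt_10 (F K : Type*) [Field F] [Field K] [Fintype F] [Fintype K]
    [Algebra F K] (hdeg : Module.finrank F K = 2)
    (q : ℕ) (hq : q = Fintype.card F)
    (p : Projectivization K (Fin 4 → K)) :
    (p ∈ BaerSubgeometry F K →
      {W : Submodule K (Fin 4 → K) | Module.finrank K W = 3 ∧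
        {r ∈ BaerSubgeometry F K | r.submodule ≤ W}.ncard = q ^ 2 + q + 1 ∧
        p.submodule ≤ W}.ncard = q ^ 2 + q + 1) ∧
    (p ∉ BaerSubgeometry F K →
      {W : Submodule K (Fin 4 → K) | Module.finrank K W = 3 ∧
        {r ∈ BaerSubgeometry F K | r.submodule ≤ W}.ncard = q ^ 2 + q + 1 ∧
        p.submodule ≤ W}.ncard = q + 1) := by
  subst hq
  have geom_sum_three (q : ℕ) : q ^ 2 + q + 1 = ∑ i ∈ Finset.range 3, q ^ i := by
    simp [geom_sum_succ', add_assoc]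
  have geom_sum_two (q : ℕ) : q + 1 = ∑ i ∈ Finset.range 2, q ^ i := by
    simp [geom_sum_succ']
  rw [baerSubgeometry_eq_rationalPoints, geom_sum_three, geom_sum_two, ← Nat.card_eq_fintype_card,
    stmt_10_general F p]
  exact ⟨fun hp ↦ by rw [coordRank_eq_one_iff.2 hp],
    fun hp ↦ by rw [coordRank_eq_two_of_notMem hdeg hp]⟩
end

section
/- Let F ⊆ K be finite fields with K of degree 2 over F, set q = |F|, let B be the Baer subgeometry of PG(3,q²) determined by F, and let P₂ be the set of planes of PG(3,q²) containing exactly q²+q+1 points of B. Then the pair (B, P₂) satisfies Property(q+1) in PG(3,q²). -/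
open scoped Classical

/-- Property(x) for a pair (P₀, P₂) of a set of points and a set of planes of PG(3,Q),
where `Q` is the field size. -/
def PropertyX (F : Type*) [Field F] (Q x : ℕ)
    (P0 : Set (Projectivization F (Fin 4 → F)))
    (P2 : Set (Submodule F (Fin 4 → F))) : Prop :=
  -- (i) every plane contains exactly x or exactly Q+x points of P₀
  (∀ W : Submodule F (Fin 4 → F), Module.finrank F W = 3 →
      {p ∈ P0 | p.submodule ≤ W}.ncard = x ∨ {p ∈ P0 | p.submodule ≤ W}.ncard = Q + x) ∧
  -- (ii) P₂ is precisely the set of planes containing exactly Q+x points of P₀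
  (∀ W : Submodule F (Fin 4 → F),
      W ∈ P2 ↔ Module.finrank F W = 3 ∧ {p ∈ P0 | p.submodule ≤ W}.ncard = Q + x) ∧
  -- (iii) every point lies on exactly x or exactly Q+x planes of P₂
  (∀ p : Projectivization F (Fin 4 → F),
      {W ∈ P2 | p.submodule ≤ W}.ncard = x ∨ {W ∈ P2 | p.submodule ≤ W}.ncard = Q + x) ∧
  -- (iv) P₀ is precisely the set of points lying on exactly Q+x planes of P₂
  (∀ p : Projectivization F (Fin 4 → F),
      p ∈ P0 ↔ {W ∈ P2 | p.submodule ≤ W}.ncard = Q + x)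

/-!
A plane is `a^⊥` for a unique point `a`, where `⊥` is taken for the standard dot product. Its points
in the subgeometry over `F` are the points of the kernel of the `F`-linear functional
`v ↦ ∑ vᵢ aᵢ` on `F⁴`, whose image is the `F`-span of the coordinates of `a`. That span has
dimension one if `a` lies in the subgeometry, and dimension two otherwise, because `[K : F] = 2`.
Hence `a^⊥` meets the subgeometry in the `q² + q + 1` points of a plane over `F` or in the `q + 1`
points of a line over `F`. The polarity `a ↦ a^⊥` therefore maps the subgeometry onto `P₂`, and, as
it reverses incidence, turns the statements about planes into those about points.
-/

open Module
open LinearMap (BilinForm)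
open scoped LinearAlgebra.Projectivization

theorem finrank_span_range_eq_one_iff {D V ι : Type*} [DivisionRing D] [AddCommGroup V]
    [Module D V] {a : ι → V} (ha : a ≠ 0) :
    finrank D (Submodule.span D (Set.range a)) = 1 ↔ ∃ (c : V) (x : ι → D), ∀ i, x i • c = a i := by
  obtain ⟨j, hj⟩ := Function.ne_iff.1 ha
  constructor
  · intro h
    have haj : (⟨a j, Submodule.subset_span ⟨j, rfl⟩⟩ : Submodule.span D (Set.range a)) ≠ 0 :=
      fun h0 => hj (congrArg Subtype.val h0)
    have hmul (i) : ∃ x : D, x • a j = a i := by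
      obtain ⟨x, hx⟩ := (finrank_eq_one_iff_of_nonzero' _ haj).1 h
        ⟨a i, Submodule.subset_span ⟨i, rfl⟩⟩
      exact ⟨x, congrArg Subtype.val hx⟩
    choose x hx using hmul
    exact ⟨a j, x, hx⟩
  · rintro ⟨c, x, hcx⟩
    have hxj : x j ≠ 0 := fun h => hj (by rw [← hcx, h, zero_smul, Pi.zero_apply])
    have hspan : Submodule.span D (Set.range a) = Submodule.span D {c} := by
      refine le_antisymm (Submodule.span_le.2 ?_) ?_
      · rintro _ ⟨i, rfl⟩
        exact Submodule.mem_span_singleton.2 ⟨x i, hcx i⟩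
      · rw [Submodule.span_singleton_le_iff_mem, ← inv_smul_smul₀ hxj c, hcx]
        exact Submodule.smul_mem _ _ (Submodule.subset_span ⟨j, rfl⟩)
    rw [hspan, finrank_span_singleton]
    rintro rfl
    exact hj (by rw [← hcx, smul_zero, Pi.zero_apply])

theorem finrank_ker_linearCombination_add_finrank_span {D V ι : Type*} [DivisionRing D]
    [AddCommGroup V] [Module D V] [Fintype ι] (a : ι → V) :
    finrank D (LinearMap.ker (Fintype.linearCombination D a)) +
      finrank D (Submodule.span D (Set.range a)) = Fintype.card ι := by
  rw [← Fintype.range_linearCombination, add_comm, LinearMap.finrank_range_add_finrank_ker,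
    finrank_fintype_fun_eq_card]

theorem ncard_points_submodule_le {D V : Type*} [DivisionRing D] [AddCommGroup V] [Module D V]
    (W : Submodule D V) : {p : ℙ D V | p.submodule ≤ W}.ncard = Nat.card (ℙ D W) := by
  have hrange : {p : ℙ D V | p.submodule ≤ W} =
      Set.range (Projectivization.map W.subtype W.injective_subtype) := by
    ext p
    constructor
    · induction p with | h v hv
      intro hle
      exact ⟨.mk D ⟨v, (Submodule.span_singleton_le_iff_mem _ _).1 hle⟩
        fun h => hv (congrArg Subtype.val h), rfl⟩
    · rintro ⟨r, rfl⟩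
      induction r with | h w hw
      exact (Submodule.span_singleton_le_iff_mem _ _).2 w.2
  rw [hrange, ← Set.image_univ,
    Set.ncard_image_of_injective _ (Projectivization.map_injective _ _), Set.ncard_univ]

section Polarity

variable {K V : Type*} [Field K] [AddCommGroup V] [Module K V] {B : BilinForm K V}

/-- The hyperplane `p^⊥` of vectors orthogonal to the point `p` with respect to the bilinear form
`B`. For nondegenerate reflexive `B`, this is the action on points of the polarity given by `B`. -/
def polarHyperplane (B : BilinForm K V) (p : ℙ K V) : Submodule K V :=
  B.orthogonal p.submodule

theorem mk_submodule_le_polarHyperplane_mk {v a : V} (hv : v ≠ 0) (ha : a ≠ 0) :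
    (Projectivization.mk K v hv).submodule ≤ polarHyperplane B (Projectivization.mk K a ha) ↔
      B a v = 0 := by
  rw [Projectivization.submodule_mk, Submodule.span_singleton_le_iff_mem]
  refine ⟨fun h => h a (Submodule.mem_span_singleton_self a), fun h w hw => ?_⟩
  obtain ⟨c, rfl⟩ := Submodule.mem_span_singleton.1 hw
  rw [map_smul, LinearMap.smul_apply, h, smul_zero]

theorem submodule_le_polarHyperplane_comm (hrefl : B.IsRefl) {p r : ℙ K V} :
    p.submodule ≤ polarHyperplane B r ↔ r.submodule ≤ polarHyperplane B p :=
  ⟨fun h w hw _ hv => hrefl _ _ (h hv w hw), fun h v hv _ hw => hrefl _ _ (h hw v hv)⟩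

variable [FiniteDimensional K V]

theorem polarHyperplane_injective (hB : B.Nondegenerate) (hrefl : B.IsRefl) :
    Function.Injective (polarHyperplane B) :=
  (Function.LeftInverse.injective (BilinForm.orthogonal_orthogonal hB hrefl)).comp
    Projectivization.submodule_injective

theorem finrank_polarHyperplane_add_one (hB : B.Nondegenerate) (p : ℙ K V) :
    finrank K (polarHyperplane B p) + 1 = finrank K V := by
  have hle : finrank K p.submodule ≤ finrank K V := Submodule.finrank_le _
  rw [p.finrank_submodule] at hle
  rw [polarHyperplane, BilinForm.finrank_orthogonal hB, p.finrank_submodule,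
    Nat.sub_add_cancel hle]

theorem exists_polarHyperplane_eq (hB : B.Nondegenerate) (hrefl : B.IsRefl)
    {W : Submodule K V} (hW : finrank K W + 1 = finrank K V) :
    ∃ p : ℙ K V, polarHyperplane B p = W := by
  have hrank : finrank K (B.orthogonal W) = 1 := by
    rw [BilinForm.finrank_orthogonal hB]
    omega
  refine ⟨.mk'' (B.orthogonal W) hrank, ?_⟩
  rw [polarHyperplane, Projectivization.submodule_mk'', BilinForm.orthogonal_orthogonal hB hrefl]

theorem ncard_polarHyperplanes_through (hB : B.Nondegenerate) (hrefl : B.IsRefl)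
    (S : Set (ℙ K V)) (p : ℙ K V) :
    {W ∈ polarHyperplane B '' S | p.submodule ≤ W}.ncard =
      {r ∈ S | r.submodule ≤ polarHyperplane B p}.ncard := by
  rw [← Set.ncard_image_of_injective _ (polarHyperplane_injective hB hrefl)]
  congr 1
  ext W
  constructor
  · rintro ⟨⟨r, hr, rfl⟩, hp⟩
    exact ⟨r, ⟨hr, (submodule_le_polarHyperplane_comm hrefl).1 hp⟩, rfl⟩
  · rintro ⟨r, ⟨hr, hle⟩, rfl⟩
    exact ⟨⟨r, hr, rfl⟩, (submodule_le_polarHyperplane_comm hrefl).1 hle⟩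

end Polarity

theorem propertyX_of_ncard_polarHyperplane {K : Type*} [Field K] {B : BilinForm K (Fin 4 → K)}
    (hB : B.Nondegenerate) (hrefl : B.IsRefl) {Q x : ℕ} (hQ : Q ≠ 0)
    {S : Set (ℙ K (Fin 4 → K))}
    (hmem : ∀ p ∈ S, {r ∈ S | r.submodule ≤ polarHyperplane B p}.ncard = Q + x)
    (hnotMem : ∀ p ∉ S, {r ∈ S | r.submodule ≤ polarHyperplane B p}.ncard = x) :
    PropertyX K Q x S {W | finrank K W = 3 ∧ {p ∈ S | p.submodule ≤ W}.ncard = Q + x} := by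
  have htwo (p) : {r ∈ S | r.submodule ≤ polarHyperplane B p}.ncard = x ∨
      {r ∈ S | r.submodule ≤ polarHyperplane B p}.ncard = Q + x := by
    by_cases hp : p ∈ S
    exacts [.inr (hmem p hp), .inl (hnotMem p hp)]
  have hiff (p) : p ∈ S ↔ {r ∈ S | r.submodule ≤ polarHyperplane B p}.ncard = Q + x := by
    refine ⟨hmem p, fun h => ?_⟩
    by_contra hp
    have hx := hnotMem p hp
    omega
  have hpolar {W : Submodule K (Fin 4 → K)} (hW : finrank K W = 3) :
      ∃ p : ℙ K (Fin 4 → K), polarHyperplane B p = W :=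
    exists_polarHyperplane_eq hB hrefl (by rw [hW, finrank_fin_fun])
  have hplanes : {W : Submodule K (Fin 4 → K) | finrank K W = 3 ∧
      {p ∈ S | p.submodule ≤ W}.ncard = Q + x} = polarHyperplane B '' S := by
    ext W
    constructor
    · rintro ⟨hW, hcard⟩
      obtain ⟨p, rfl⟩ := hpolar hW
      exact ⟨p, (hiff p).2 hcard, rfl⟩
    · rintro ⟨p, hp, rfl⟩
      have hrank := finrank_polarHyperplane_add_one hB p
      rw [finrank_fin_fun] at hrank
      exact ⟨Nat.succ_injective hrank, hmem p hp⟩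
  refine ⟨fun W hW => ?_, fun W => Iff.rfl, fun p => ?_, fun p => ?_⟩
  · obtain ⟨p, rfl⟩ := hpolar hW
    exact htwo p
  · rw [hplanes, ncard_polarHyperplanes_through hB hrefl]
    exact htwo p
  · rw [hplanes, ncard_polarHyperplanes_through hB hrefl]
    exact hiff p

section DotProduct

variable {K ι : Type*} [Field K] [Fintype ι]

theorem dotProductBilin_isRefl_s11 : LinearMap.IsRefl (dotProductBilin K K : BilinForm K (ι → K)) :=
  fun v w h => (dotProduct_comm w v).trans h

theorem dotProductBilin_nondegenerate_s11 :
    (dotProductBilin K K : BilinForm K (ι → K)).Nondegenerate :=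
  dotProductBilin_isRefl_s11.nondegenerate_iff_separatingLeft.2 dotProduct_eq_zero

end DotProduct

section Subgeometry

variable (F K ι : Type*) [Field F] [Field K] [Algebra F K]

/-- The coordinatewise inclusion `F^ι → K^ι`, semilinear over `F → K`. -/
def coordinateInclusion : (ι → F) →ₛₗ[algebraMap F K] (ι → K) where
  toFun v i := algebraMap F K (v i)
  map_add' v w := funext fun i => map_add _ (v i) (w i)
  map_smul' c v := funext fun i => map_mul _ c (v i)

theorem coordinateInclusion_injective : Function.Injective (coordinateInclusion F K ι) :=
  (algebraMap F K).injective.comp_left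

/-- The inclusion of the projective space of `F^ι` into that of `K^ι`. Its range is the subgeometry
determined by `F`. -/
def subgeometryInclusion : ℙ F (ι → F) → ℙ K (ι → K) :=
  Projectivization.map (coordinateInclusion F K ι) (coordinateInclusion_injective F K ι)

theorem subgeometryInclusion_injective : Function.Injective (subgeometryInclusion F K ι) := by
  intro p r h
  induction p with | h v hv
  induction r with | h w hw
  obtain ⟨c, hc⟩ := (Projectivization.mk_eq_mk_iff' _ _ _ _ _).1 h
  have hcoord (i) : c * algebraMap F K (w i) = algebraMap F K (v i) := congrFun hc i
  obtain ⟨i, hi⟩ := Function.ne_iff.1 hw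
  have hc_eq : c = algebraMap F K (v i / w i) := by
    rw [map_div₀, eq_div_iff ((map_ne_zero _).2 hi), hcoord]
  refine (Projectivization.mk_eq_mk_iff' _ _ _ _ _).2 ⟨v i / w i, ?_⟩
  refine coordinateInclusion_injective F K ι ?_
  rw [map_smulₛₗ, ← hc_eq]
  exact hc

theorem range_subgeometryInclusion_fin_four :
    Set.range (subgeometryInclusion F K (Fin 4)) = BaerSubgeometry F K := by
  ext p
  constructor
  · rintro ⟨r, rfl⟩
    induction r with | h v hv
    exact ⟨coordinateInclusion F K _ v, _, fun i => ⟨v i, rfl⟩, rfl⟩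
  · rintro ⟨w, hw, hF, rfl⟩
    choose v hv using hF
    obtain rfl : coordinateInclusion F K _ v = w := funext hv
    exact ⟨.mk F v (ne_zero_of_map hw), rfl⟩

variable {F K ι}

theorem mk_mem_range_subgeometryInclusion_iff {a : ι → K} (ha : a ≠ 0) :
    Projectivization.mk K a ha ∈ Set.range (subgeometryInclusion F K ι) ↔
      ∃ (c : K) (v : ι → F), ∀ i, v i • c = a i := by
  constructor
  · rintro ⟨r, hr⟩
    induction r with | h v hv
    obtain ⟨c, hc⟩ := (Projectivization.mk_eq_mk_iff' _ _ _ _ _).1 hr.symm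
    refine ⟨c, v, fun i => ?_⟩
    rw [Algebra.smul_def, mul_comm]
    exact congrFun hc i
  · rintro ⟨c, v, hcv⟩
    have hac : c • coordinateInclusion F K ι v = a := by
      ext i
      rw [← hcv i, Algebra.smul_def (v i), mul_comm]
      rfl
    have hv : v ≠ 0 := by
      rintro rfl
      exact ha (by rw [← hac, map_zero, smul_zero])
    exact ⟨.mk F v hv, ((Projectivization.mk_eq_mk_iff' _ _ _ _ _).2 ⟨c, hac⟩).symm⟩

variable [Fintype ι]

theorem subgeometryInclusion_submodule_le_polarHyperplane_iff {a : ι → K} (ha : a ≠ 0)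
    (p : ℙ F (ι → F)) :
    (subgeometryInclusion F K ι p).submodule ≤
        polarHyperplane (dotProductBilin K K) (Projectivization.mk K a ha) ↔
      p.submodule ≤ LinearMap.ker (Fintype.linearCombination F a) := by
  induction p with | h v hv
  rw [subgeometryInclusion, Projectivization.map_mk, mk_submodule_le_polarHyperplane_mk,
    Projectivization.submodule_mk, Submodule.span_singleton_le_iff_mem, LinearMap.mem_ker,
    Fintype.linearCombination_apply, dotProductBilin_apply_apply, dotProduct_comm]
  simp only [Algebra.smul_def]
  rfl

end Subgeometry

section Counting

variable {F K ι : Type*} [Field F] [Finite F] [Field K] [Algebra F K] [Fintype ι]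

theorem ncard_subgeometry_inter_polarHyperplane {a : ι → K} (ha : a ≠ 0) {m : ℕ}
    (hm : m + finrank F (Submodule.span F (Set.range a)) = Fintype.card ι) :
    {p ∈ Set.range (subgeometryInclusion F K ι) | p.submodule ≤
        polarHyperplane (dotProductBilin K K) (Projectivization.mk K a ha)}.ncard =
      ∑ i ∈ Finset.range m, Nat.card F ^ i := by
  have himage : {p ∈ Set.range (subgeometryInclusion F K ι) | p.submodule ≤
        polarHyperplane (dotProductBilin K K) (Projectivization.mk K a ha)} =
      subgeometryInclusion F K ι ''
        {p | p.submodule ≤ LinearMap.ker (Fintype.linearCombination F a)} := by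
    simp only [← subgeometryInclusion_submodule_le_polarHyperplane_iff ha]
    exact Set.image_preimage_eq_range_inter.symm
  have hker : finrank F (LinearMap.ker (Fintype.linearCombination F a)) = m :=
    Nat.add_right_cancel ((finrank_ker_linearCombination_add_finrank_span a).trans hm.symm)
  rw [himage, Set.ncard_image_of_injective _ (subgeometryInclusion_injective F K ι),
    ncard_points_submodule_le, Projectivization.card_of_finrank F _ hker]

theorem ncard_baerSubgeometry_inter_polarHyperplane_of_mem {p : ℙ K (Fin 4 → K)}
    (hp : p ∈ BaerSubgeometry F K) :
    {r ∈ BaerSubgeometry F K |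
        r.submodule ≤ polarHyperplane (dotProductBilin K K) p}.ncard =
      Nat.card F ^ 2 + Nat.card F + 1 := by
  rw [← range_subgeometryInclusion_fin_four] at hp ⊢
  induction p with | h a ha
  have hspan := (finrank_span_range_eq_one_iff ha).2
    ((mk_mem_range_subgeometryInclusion_iff ha).1 hp)
  rw [ncard_subgeometry_inter_polarHyperplane ha (m := 3) (by rw [hspan, Fintype.card_fin])]
  simp only [Finset.sum_range_succ, Finset.sum_range_zero]
  ring

theorem ncard_baerSubgeometry_inter_polarHyperplane_of_notMem (hdeg : finrank F K = 2)
    {p : ℙ K (Fin 4 → K)} (hp : p ∉ BaerSubgeometry F K) :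
    {r ∈ BaerSubgeometry F K |
        r.submodule ≤ polarHyperplane (dotProductBilin K K) p}.ncard =
      Nat.card F + 1 := by
  rw [← range_subgeometryInclusion_fin_four] at hp ⊢
  induction p with | h a ha
  have : FiniteDimensional F K := finite_of_finrank_pos (by omega)
  have hspan : finrank F (Submodule.span F (Set.range a)) = 2 := by
    have hne_one : finrank F (Submodule.span F (Set.range a)) ≠ 1 := fun h =>
      hp ((mk_mem_range_subgeometryInclusion_iff ha).2 ((finrank_span_range_eq_one_iff ha).1 h))
    have hle : finrank F (Submodule.span F (Set.range a)) ≤ finrank F K := Submodule.finrank_le _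
    have hne_zero : finrank F (Submodule.span F (Set.range a)) ≠ 0 := by
      rw [Ne, Submodule.finrank_eq_zero, Submodule.span_eq_bot, Set.forall_mem_range]
      exact fun h => ha (funext h)
    omega
  rw [ncard_subgeometry_inter_polarHyperplane ha (m := 2) (by rw [hspan, Fintype.card_fin])]
  simp only [Finset.sum_range_succ, Finset.sum_range_zero]
  ring

end Counting

/-- The Baer subgeometry B of PG(3,q²), together with the set P₂ of planes
containing exactly q²+q+1 points of B, satisfies Property(q+1) in PG(3,q²)
(whose field size is q²). -/
theorem stmt_11 (F K : Type*) [Field F] [Field K] [Fintype F] [Fintype K]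
    [Algebra F K] (hdeg : Module.finrank F K = 2)
    (q : ℕ) (hq : q = Fintype.card F) :
    PropertyX K (q ^ 2) (q + 1)
      (BaerSubgeometry F K)
      {W : Submodule K (Fin 4 → K) | Module.finrank K W = 3 ∧
        {p ∈ BaerSubgeometry F K | p.submodule ≤ W}.ncard = q ^ 2 + q + 1} := by
  rw [← Nat.card_eq_fintype_card] at hq
  subst hq
  refine propertyX_of_ncard_polarHyperplane dotProductBilin_nondegenerate_s11 dotProductBilin_isRefl_s11
    (pow_ne_zero 2 Nat.card_pos.ne') (fun p hp => ?_) (fun p hp => ?_)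
  · exact ncard_baerSubgeometry_inter_polarHyperplane_of_mem hp
  · exact ncard_baerSubgeometry_inter_polarHyperplane_of_notMem hdeg hp
end

section
/- Let x be a natural number and let (P₀, P₂) be a pair consisting of a set of points and a set of planes of PG(3,q) satisfying Property(x). Then |P₀| = |P₂| = x(q+1). -/
open scoped Classical

/-!
Count the incident pairs (point of `P₀`, plane) in two ways: with `v = (q + 1)(q² + 1)` and
`k = q² + q + 1`, this gives `k |P₀| = v x + q |P₂|`, because a plane meets `P₀` in `x` points, plus
`q` more if it belongs to `P₂`. Dually `k |P₂| = v x + q |P₀|`. Subtracting, `|P₀| = |P₂|`, and then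
`(k - q) |P₀| = v x`, where `k - q = q² + 1`.
-/

section DoubleCounting

/-- The points `S` of an incidence structure `r` meet the blocks in `B` in two intersection
numbers: `m + x` for the blocks belonging to the subset `P`, and `x` for the remaining ones. -/
structure IsTwoIntersection {α β : Type*} (r : α → β → Prop) (S : Set α) (B P : Set β)
    (m x : ℕ) : Prop where
  subset : P ⊆ B
  ncard_of_mem : ∀ b ∈ P, {a ∈ S | r a b}.ncard = m + x
  ncard_of_notMem : ∀ b ∈ B, b ∉ P → {a ∈ S | r a b}.ncard = x

namespace IsTwoIntersection

variable {α β : Type*} {r : α → β → Prop} {S A : Set α} {B P : Set β} {m x k : ℕ}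

theorem ncard_mul_eq (h : IsTwoIntersection r S B P m x) (hS : S.Finite) (hB : B.Finite)
    (hk : ∀ a ∈ S, {b ∈ B | r a b}.ncard = k) :
    S.ncard * k = B.ncard * x + P.ncard * m := by
  lift P to Finset β using hB.subset h.subset
  lift S to Finset α using hS
  lift B to Finset β using hB
  have hPB : P ⊆ B := Finset.coe_subset.mp h.subset
  have card_above : ∀ a ∈ S, (B.bipartiteAbove r a).card = k := fun a ha => by
    rw [← Set.ncard_coe_finset, Finset.coe_bipartiteAbove]
    exact hk a ha
  have card_below : ∀ b ∈ B, (S.bipartiteBelow r b).card = x + if b ∈ P then m else 0 := by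
    intro b hb
    rw [← Set.ncard_coe_finset, Finset.coe_bipartiteBelow]
    split_ifs with hbP
    · exact (h.ncard_of_mem b hbP).trans (add_comm m x)
    · exact h.ncard_of_notMem b hb hbP
  simp only [Set.ncard_coe_finset]
  calc S.card * k
      = ∑ a ∈ S, (B.bipartiteAbove r a).card := (Finset.sum_const_nat card_above).symm
    _ = ∑ b ∈ B, (S.bipartiteBelow r b).card :=
      Finset.sum_card_bipartiteAbove_eq_sum_card_bipartiteBelow r
    _ = ∑ b ∈ B, (x + if b ∈ P then m else 0) := Finset.sum_congr rfl card_below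
    _ = B.card * x + P.card * m := by
      rw [Finset.sum_add_distrib, Finset.sum_ite_mem, Finset.inter_eq_right.mpr hPB,
        Finset.sum_const, Finset.sum_const, smul_eq_mul, smul_eq_mul]

theorem ncard_eq_ncard (h : IsTwoIntersection r S B P m x)
    (h' : IsTwoIntersection (flip r) P A S m x) (hA : A.Finite) (hB : B.Finite)
    (hAB : A.ncard = B.ncard) (hk : ∀ a ∈ S, {b ∈ B | r a b}.ncard = k)
    (hk' : ∀ b ∈ P, {a ∈ A | r a b}.ncard = k) (hk0 : 0 < k) :
    S.ncard = P.ncard := by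
  have count := h.ncard_mul_eq (hA.subset h'.subset) hB hk
  have count' := h'.ncard_mul_eq (hB.subset h.subset) hA hk'
  rw [hAB] at count'
  refine Nat.eq_of_mul_eq_mul_right (Nat.add_pos_left hk0 m) ?_
  linarith

end IsTwoIntersection

end DoubleCounting

section ProjectiveCounting

open Module
open scoped LinearAlgebra.Projectivization

theorem range_projectivization_map_subtype {K V : Type*} [DivisionRing K] [AddCommGroup V]
    [Module K V] (W : Submodule K V) :
    Set.range (Projectivization.map W.subtype W.injective_subtype) =
      {p : ℙ K V | p.submodule ≤ W} := by
  ext p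
  constructor
  · rintro ⟨p, rfl⟩
    induction p using Projectivization.ind with
    | h w hw =>
      simp only [Projectivization.map_mk, Set.mem_ofPred_eq, Projectivization.submodule_mk]
      exact (Submodule.span_singleton_le_iff_mem _ _).mpr w.2
  · intro hp
    induction p using Projectivization.ind with
    | h v hv =>
      rw [Set.mem_ofPred_eq, Projectivization.submodule_mk,
        Submodule.span_singleton_le_iff_mem] at hp
      exact ⟨.mk K ⟨v, hp⟩ (by simpa using hv), rfl⟩

theorem image_dualAnnihilator_hyperplanes_ge {K V : Type*} [Field K] [AddCommGroup V]
    [Module K V] [FiniteDimensional K V] (U : Submodule K V) :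
    Submodule.dualAnnihilator '' {H : Submodule K V | finrank K H + 1 = finrank K V ∧ U ≤ H} =
      Projectivization.submodule '' {p : ℙ K (Dual K V) | p.submodule ≤ U.dualAnnihilator} := by
  ext L
  constructor
  · rintro ⟨H, ⟨hH, hUH⟩, rfl⟩
    have hrank : finrank K H.dualAnnihilator = 1 := by
      linarith [Subspace.finrank_add_finrank_dualAnnihilator_eq H]
    refine ⟨.mk'' _ hrank, ?_, Projectivization.submodule_mk'' _ hrank⟩
    rw [Set.mem_ofPred_eq, Projectivization.submodule_mk'']
    exact Submodule.dualAnnihilator_anti hUH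
  · rintro ⟨p, hp, rfl⟩
    have hcoann := Subspace.dualCoannihilator_dualAnnihilator_eq (W := p.submodule)
    have hrank := Subspace.finrank_add_finrank_dualAnnihilator_eq p.submodule.dualCoannihilator
    rw [hcoann, p.finrank_submodule] at hrank
    exact ⟨_, ⟨hrank, Submodule.le_dualAnnihilator_iff_le_dualCoannihilator.mp hp⟩, hcoann⟩

variable {K V : Type*} [Field K] [Finite K] [AddCommGroup V] [Module K V]

theorem ncard_points_le (W : Submodule K V) :
    {p : ℙ K V | p.submodule ≤ W}.ncard = ∑ i ∈ Finset.range (finrank K W), Nat.card K ^ i := by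
  rw [← range_projectivization_map_subtype,
    Set.ncard_range_of_injective (Projectivization.map_injective _ _),
    Projectivization.card_of_finrank K W rfl]

theorem ncard_hyperplanes_ge [FiniteDimensional K V] (U : Submodule K V) :
    {H : Submodule K V | finrank K H + 1 = finrank K V ∧ U ≤ H}.ncard =
      ∑ i ∈ Finset.range (finrank K V - finrank K U), Nat.card K ^ i := by
  have annihilator_injective : Function.Injective (Submodule.dualAnnihilator (R := K) (M := V)) :=
    fun _ _ h => Subspace.dualAnnihilator_inj.mp h
  rw [← Set.ncard_image_of_injective _ annihilator_injective,
    image_dualAnnihilator_hyperplanes_ge,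
    Set.ncard_image_of_injective _ Projectivization.submodule_injective, ncard_points_le,
    ← Subspace.finrank_add_finrank_dualAnnihilator_eq U, Nat.add_sub_cancel_left]

theorem ncard_points_of_finrank_eq_four (hV : finrank K V = 4) :
    (Set.univ : Set (ℙ K V)).ncard = (Nat.card K + 1) * (Nat.card K ^ 2 + 1) := by
  rw [Set.ncard_univ, Projectivization.card_of_finrank K V hV]
  simp only [Finset.sum_range_succ, Finset.sum_range_zero]
  ring

theorem ncard_points_le_plane {W : Submodule K V} (hW : finrank K W = 3) :
    {p : ℙ K V | p.submodule ≤ W}.ncard = Nat.card K ^ 2 + Nat.card K + 1 := by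
  rw [ncard_points_le, hW]
  simp only [Finset.sum_range_succ, Finset.sum_range_zero]
  ring

theorem ncard_planes_of_finrank_eq_four (hV : finrank K V = 4) :
    {W : Submodule K V | finrank K W = 3}.ncard =
      (Nat.card K + 1) * (Nat.card K ^ 2 + 1) := by
  have : FiniteDimensional K V := .of_finrank_pos (by lia)
  have h := ncard_hyperplanes_ge (⊥ : Submodule K V)
  simp only [hV, Nat.reduceEqDiff, bot_le, and_true, finrank_bot, Nat.sub_zero,
    Finset.sum_range_succ, Finset.sum_range_zero] at h
  rw [h]
  ring

theorem ncard_planes_ge_point (hV : finrank K V = 4) (p : ℙ K V) :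
    {W : Submodule K V | finrank K W = 3 ∧ p.submodule ≤ W}.ncard =
      Nat.card K ^ 2 + Nat.card K + 1 := by
  have : FiniteDimensional K V := .of_finrank_pos (by lia)
  have h := ncard_hyperplanes_ge p.submodule
  simp only [hV, Nat.reduceEqDiff, p.finrank_submodule, Nat.reduceSub,
    Finset.sum_range_succ, Finset.sum_range_zero] at h
  rw [h]
  ring

end ProjectiveCounting

namespace PropertyX

variable {F : Type*} [Field F] {q x : ℕ} {P0 : Set (Projectivization F (Fin 4 → F))}
  {P2 : Set (Submodule F (Fin 4 → F))}

theorem isTwoIntersection_points (h : PropertyX F q x P0 P2) :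
    IsTwoIntersection (fun p W => p.submodule ≤ W) P0
      {W : Submodule F (Fin 4 → F) | Module.finrank F W = 3} P2 q x where
  subset W hW := ((h.2.1 W).mp hW).1
  ncard_of_mem W hW := ((h.2.1 W).mp hW).2
  ncard_of_notMem W hW hWP := (h.1 W hW).resolve_right fun hn => hWP ((h.2.1 W).mpr ⟨hW, hn⟩)

theorem isTwoIntersection_planes (h : PropertyX F q x P0 P2) :
    IsTwoIntersection (flip fun p W => p.submodule ≤ W) P2 Set.univ P0 q x where
  subset := Set.subset_univ P0
  ncard_of_mem p hp := (h.2.2.2 p).mp hp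
  ncard_of_notMem p _ hpP := (h.2.2.1 p).resolve_right fun hn => hpP ((h.2.2.2 p).mpr hn)

end PropertyX

/-- If (P₀, P₂) satisfies Property(x) in PG(3,q), then |P₀| = |P₂| = x(q+1). -/
theorem stmt_12 (F : Type*) [Field F] [Fintype F] (q : ℕ) (hq : q = Fintype.card F)
    (x : ℕ)
    (P0 : Set (Projectivization F (Fin 4 → F)))
    (P2 : Set (Submodule F (Fin 4 → F)))
    (hprop : PropertyX F q x P0 P2) :
    P0.ncard = x * (q + 1) ∧ P2.ncard = x * (q + 1) := by
  obtain rfl : q = Nat.card F := hq.trans Nat.card_eq_fintype_card.symm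
  have hF : Module.finrank F (Fin 4 → F) = 4 := Module.finrank_fin_fun F
  have hpoints := hprop.isTwoIntersection_points
  have hplanes := hprop.isTwoIntersection_planes
  have points_on : ∀ W ∈ P2, {p ∈ Set.univ | Projectivization.submodule p ≤ W}.ncard =
      Nat.card F ^ 2 + Nat.card F + 1 := fun W hW => by
    simpa only [Set.mem_univ, true_and] using ncard_points_le_plane (hpoints.subset hW)
  have hP : P0.ncard = P2.ncard :=
    hpoints.ncard_eq_ncard hplanes Set.finite_univ (Set.toFinite _)
      ((ncard_points_of_finrank_eq_four hF).trans (ncard_planes_of_finrank_eq_four hF).symm)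
      (fun p _ => ncard_planes_ge_point hF p) points_on (Nat.succ_pos _)
  have count := hpoints.ncard_mul_eq P0.toFinite (Set.toFinite _)
    fun p _ => ncard_planes_ge_point hF p
  rw [ncard_planes_of_finrank_eq_four hF, ← hP] at count
  have hP0 : P0.ncard = x * (Nat.card F + 1) :=
    Nat.eq_of_mul_eq_mul_right (Nat.succ_pos (Nat.card F ^ 2)) (by linarith)
  exact ⟨hP0, hP ▸ hP0⟩
end

section
/- Let K be a finite field with |K| = Q, let m ≥ 1 be a natural number, and let P₀ be a set of points of PG(3,Q) with |P₀| = m(Q+1) such that every plane of PG(3,Q) contains exactly m or exactly m+Q points of P₀. Then every point of P₀ lies on exactly m+Q planes containing exactly m+Q points of P₀, and every point of PG(3,Q) not in P₀ lies on exactly m planes containing exactly m+Q points of P₀. -/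
open scoped Classical

/-!
Fix a point `p` and count the pairs `(r, W)` with `r ∈ P₀` and `W` a hyperplane through `p` and
`r`. Write `θ k = 1 + q + ⋯ + q ^ (k - 1)` and let the ambient vector space have dimension `n + 3`.
A point `r ≠ p` is in `θ (n + 1)` such pairs and `r = p` is in `θ (n + 2) = θ (n + 1) + q ^ (n + 1)`
of them, whereas each of the `θ (n + 2)` hyperplanes through `p` contributes `m * θ n`, plus `q ^ n`
if it is one of those to be counted. As `θ (n + 1) ^ 2 = θ n * θ (n + 2) + q ^ n`, comparing the two
counts and cancelling `q ^ n` leaves `m`, plus `q` if `p ∈ P₀`. Projective three-space is the case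
`n = 1`.
-/

section DoubleCounting

variable {α β : Type*} (r : α → β → Prop) {a k : ℕ}

lemma sum_card_bipartiteAbove_of_card_bipartiteBelow_eq_or_eq {s : Finset α} {t : Finset β}
    (h : ∀ y ∈ t, (s.bipartiteBelow r y).card = a ∨ (s.bipartiteBelow r y).card = a + k) :
    ∑ x ∈ s, (t.bipartiteAbove r x).card =
      a * t.card + k * (t.filter fun y ↦ (s.bipartiteBelow r y).card = a + k).card := by
  have card_below : ∀ y ∈ t, (s.bipartiteBelow r y).card =
      a + if (s.bipartiteBelow r y).card = a + k then k else 0 := by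
    intro y hy
    split_ifs with hk
    · exact hk
    · exact (h y hy).resolve_right hk
  rw [Finset.sum_card_bipartiteAbove_eq_sum_card_bipartiteBelow, Finset.sum_congr rfl card_below,
    Finset.sum_add_distrib, ← Finset.sum_filter, Finset.sum_const, Finset.sum_const]
  simp only [smul_eq_mul, mul_comm]

lemma ncard_mul_add_ite_eq_of_ncard_eq_or_eq {s : Set α} {t : Set β} (hs : s.Finite)
    (ht : t.Finite) {p : α} {c d : ℕ}
    (hr : ∀ x, {y ∈ t | r x y}.ncard = c + if x = p then d else 0)
    (h : ∀ y ∈ t, {x ∈ s | r x y}.ncard = a ∨ {x ∈ s | r x y}.ncard = a + k) :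
    s.ncard * c + (if p ∈ s then d else 0) =
      a * t.ncard + k * {y ∈ t | {x ∈ s | r x y}.ncard = a + k}.ncard := by
  lift s to Finset α using hs
  lift t to Finset β using ht
  simp only [Finset.mem_coe, ← Finset.coe_filter, Set.ncard_coe_finset] at hr h ⊢
  calc s.card * c + (if p ∈ s then d else 0)
      = ∑ x ∈ s, (t.bipartiteAbove r x).card := by
        simp only [Finset.bipartiteAbove, hr, Finset.sum_add_distrib, Finset.sum_const,
          smul_eq_mul, Finset.sum_ite_eq']
    _ = _ := sum_card_bipartiteAbove_of_card_bipartiteBelow_eq_or_eq r h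

end DoubleCounting

section Subspaces

open Module

variable {K V : Type*} [Field K] [AddCommGroup V] [Module K V]

lemma finrank_submodule_sup_submodule_of_ne {p r : Projectivization K V} (h : p ≠ r) :
    finrank K (p.submodule ⊔ r.submodule : Submodule K V) = 2 := by
  have hli : LinearIndependent K ![p.rep, r.rep] :=
    Projectivization.linearIndependent_pair_iff_ne.2 h
  rw [p.submodule_eq, r.submodule_eq, ← Submodule.span_union, Set.singleton_union,
    ← Matrix.range_cons_cons_empty, finrank_span_eq_card hli, Fintype.card_fin]

lemma ncard_setOf_finrank_eq_one_and_le [Finite K] (A : Submodule K V) :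
    {L : Submodule K V | finrank K L = 1 ∧ L ≤ A}.ncard =
      ∑ i ∈ Finset.range (finrank K A), Nat.card K ^ i := by
  have hbij : Set.BijOn (fun x : Projectivization K A ↦ x.submodule.map A.subtype) Set.univ
      {L | finrank K L = 1 ∧ L ≤ A} := by
    refine ⟨fun x _ ↦ ⟨?_, Submodule.map_subtype_le _ _⟩, Function.Injective.injOn ?_, ?_⟩
    · rw [Submodule.finrank_map_subtype_eq, x.finrank_submodule]
    · exact (Submodule.map_injective_of_injective A.subtype_injective).comp
        Projectivization.submodule_injective
    · rintro L ⟨hL, hLA⟩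
      have hcomap : finrank K (L.comap A.subtype) = 1 := by
        rw [(Submodule.comapSubtypeEquivOfLe hLA).finrank_eq, hL]
      refine ⟨Projectivization.mk'' _ hcomap, Set.mem_univ _, ?_⟩
      simp only [Projectivization.submodule_mk'', Submodule.map_comap_subtype, inf_eq_right.2 hLA]
  rw [← hbij.ncard_eq, Set.ncard_univ, Projectivization.card_of_finrank K A rfl]

/-- The hyperplanes of the projective space of `V` containing the projective subspace of `U`,
encoded as the subspaces of `V` of codimension one containing `U`. The codimension condition is
phrased additively to avoid truncated subtraction. -/
def hyperplanesThrough (U : Submodule K V) : Set (Submodule K V) :=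
  {W | finrank K W + 1 = finrank K V ∧ U ≤ W}

lemma bijOn_dualAnnihilator_hyperplanesThrough [FiniteDimensional K V] (U : Submodule K V) :
    Set.BijOn Submodule.dualAnnihilator (hyperplanesThrough U)
      {L | finrank K L = 1 ∧ L ≤ U.dualAnnihilator} := by
  refine ⟨fun W ⟨hW, hUW⟩ ↦ ⟨?_, Submodule.dualAnnihilator_anti hUW⟩,
    fun W _ W' _ h ↦ Subspace.dualAnnihilator_inj.1 h,
    fun L ⟨hL, hLU⟩ ↦ ⟨L.dualCoannihilator, ⟨?_, ?_⟩,
      Subspace.dualCoannihilator_dualAnnihilator_eq⟩⟩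
  · have := Subspace.finrank_add_finrank_dualAnnihilator_eq W
    lia
  · have := Subspace.finrank_add_finrank_dualCoannihilator_eq L
    lia
  · exact Submodule.le_dualAnnihilator_iff_le_dualCoannihilator.1 hLU

lemma ncard_hyperplanesThrough [Finite K] [FiniteDimensional K V] (U : Submodule K V) :
    (hyperplanesThrough U).ncard =
      ∑ i ∈ Finset.range (finrank K V - finrank K U), Nat.card K ^ i := by
  rw [(bijOn_dualAnnihilator_hyperplanesThrough U).ncard_eq, ncard_setOf_finrank_eq_one_and_le,
    ← Subspace.finrank_add_finrank_dualAnnihilator_eq U, Nat.add_sub_cancel_left]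

lemma ncard_hyperplanesThrough_point_point [Finite K] {n : ℕ} (hV : finrank K V = n + 2)
    (p r : Projectivization K V) :
    {W ∈ hyperplanesThrough p.submodule | r.submodule ≤ W}.ncard =
      ∑ i ∈ Finset.range n, Nat.card K ^ i + if r = p then Nat.card K ^ n else 0 := by
  have : FiniteDimensional K V := Module.finite_of_finrank_pos (by lia)
  have hsup : {W ∈ hyperplanesThrough p.submodule | r.submodule ≤ W} =
      hyperplanesThrough (p.submodule ⊔ r.submodule) := by
    simp only [hyperplanesThrough, Set.mem_ofPred_eq, and_assoc, sup_le_iff]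
  rw [hsup, ncard_hyperplanesThrough, hV]
  split_ifs with h
  · rw [h, sup_idem, p.finrank_submodule, ← Finset.sum_range_succ]
    rfl
  · rw [finrank_submodule_sup_submodule_of_ne (Ne.symm h), Nat.add_sub_cancel, add_zero]

lemma ncard_mul_geom_sum_add_ite_eq [Finite K] {n a k : ℕ} (hV : finrank K V = n + 2)
    (P0 : Set (Projectivization K V)) (p : Projectivization K V)
    (h : ∀ W ∈ hyperplanesThrough p.submodule,
      {r ∈ P0 | r.submodule ≤ W}.ncard = a ∨ {r ∈ P0 | r.submodule ≤ W}.ncard = a + k) :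
    P0.ncard * ∑ i ∈ Finset.range n, Nat.card K ^ i + (if p ∈ P0 then Nat.card K ^ n else 0) =
      a * ∑ i ∈ Finset.range (n + 1), Nat.card K ^ i +
        k * {W ∈ hyperplanesThrough p.submodule |
          {r ∈ P0 | r.submodule ≤ W}.ncard = a + k}.ncard := by
  have : FiniteDimensional K V := Module.finite_of_finrank_pos (by lia)
  have : Finite V := Module.finite_of_finite K
  have hp : (hyperplanesThrough p.submodule).ncard =
      ∑ i ∈ Finset.range (n + 1), Nat.card K ^ i := by
    rw [ncard_hyperplanesThrough, hV, p.finrank_submodule]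
    rfl
  rw [← hp]
  exact ncard_mul_add_ite_eq_of_ncard_eq_or_eq
    (fun (r : Projectivization K V) (W : Submodule K V) ↦ r.submodule ≤ W) P0.toFinite
    (Set.toFinite _) (ncard_hyperplanesThrough_point_point hV p) h

end Subspaces

lemma geom_sum_mul_self_eq {R : Type*} [CommSemiring R] (q : R) (n : ℕ) :
    (∑ i ∈ Finset.range (n + 1), q ^ i) * ∑ i ∈ Finset.range (n + 1), q ^ i =
      (∑ i ∈ Finset.range n, q ^ i) * ∑ i ∈ Finset.range (n + 2), q ^ i + q ^ n := by
  calc (∑ i ∈ Finset.range (n + 1), q ^ i) * ∑ i ∈ Finset.range (n + 1), q ^ i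
      = (q * ∑ i ∈ Finset.range n, q ^ i + 1) * ∑ i ∈ Finset.range (n + 1), q ^ i := by
        rw [← geom_sum_succ]
    _ = q * (∑ i ∈ Finset.range n, q ^ i) * (∑ i ∈ Finset.range (n + 1), q ^ i) +
          ∑ i ∈ Finset.range (n + 1), q ^ i := by ring
    _ = q * (∑ i ∈ Finset.range n, q ^ i) * (∑ i ∈ Finset.range (n + 1), q ^ i) +
          (∑ i ∈ Finset.range n, q ^ i + q ^ n) := by rw [← Finset.sum_range_succ]
    _ = (∑ i ∈ Finset.range n, q ^ i) * (q * ∑ i ∈ Finset.range (n + 1), q ^ i + 1) + q ^ n := by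
        ring
    _ = (∑ i ∈ Finset.range n, q ^ i) * ∑ i ∈ Finset.range (n + 2), q ^ i + q ^ n := by
        rw [← geom_sum_succ]

theorem stmt_14_general {K V : Type*} [Field K] [Finite K] [AddCommGroup V] [Module K V]
    {n : ℕ} (hV : Module.finrank K V = n + 3) (m : ℕ) (P0 : Set (Projectivization K V))
    (hcard : P0.ncard = m * ∑ i ∈ Finset.range (n + 1), Nat.card K ^ i)
    (hhyperplanes : ∀ W : Submodule K V, Module.finrank K W = n + 2 →
      {p ∈ P0 | p.submodule ≤ W}.ncard = m * ∑ i ∈ Finset.range n, Nat.card K ^ i ∨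
      {p ∈ P0 | p.submodule ≤ W}.ncard =
        m * ∑ i ∈ Finset.range n, Nat.card K ^ i + Nat.card K ^ n)
    (p : Projectivization K V) :
    {W : Submodule K V | Module.finrank K W = n + 2 ∧
      {r ∈ P0 | r.submodule ≤ W}.ncard =
        m * ∑ i ∈ Finset.range n, Nat.card K ^ i + Nat.card K ^ n ∧ p.submodule ≤ W}.ncard =
      m + if p ∈ P0 then Nat.card K else 0 := by
  have mem_hyperplanesThrough (W : Submodule K V) :
      W ∈ hyperplanesThrough p.submodule ↔ Module.finrank K W = n + 2 ∧ p.submodule ≤ W := by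
    simp only [hyperplanesThrough, hV, Set.mem_ofPred_eq, Nat.add_right_cancel_iff (n := 1)]
  have hcount := ncard_mul_geom_sum_add_ite_eq hV P0 p
    fun W hW ↦ hhyperplanes W ((mem_hyperplanesThrough W).1 hW).1
  simp only [mem_hyperplanesThrough, and_assoc, and_comm (a := p.submodule ≤ _)] at hcount
  rw [hcard, mul_assoc, geom_sum_mul_self_eq, mul_add, ← mul_assoc, add_assoc,
    Nat.add_left_cancel_iff] at hcount
  refine Nat.eq_of_mul_eq_mul_left (pow_pos Nat.card_pos n) (hcount.symm.trans ?_)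
  split_ifs <;> ring

/-- Let P₀ be a set of points of PG(3,Q) with |P₀| = m(Q+1), m ≥ 1, such that
every plane contains exactly m or exactly m+Q points of P₀. Then every point of
P₀ lies on exactly m+Q planes containing exactly m+Q points of P₀, and every
point not in P₀ lies on exactly m such planes. -/
theorem stmt_14 (K : Type*) [Field K] [Fintype K] (Q : ℕ) (hQ : Q = Fintype.card K)
    (m : ℕ) (hm : 1 ≤ m)
    (P0 : Set (Projectivization K (Fin 4 → K)))
    (hcard : P0.ncard = m * (Q + 1))
    (hplanes : ∀ W : Submodule K (Fin 4 → K), Module.finrank K W = 3 →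
      {p ∈ P0 | p.submodule ≤ W}.ncard = m ∨ {p ∈ P0 | p.submodule ≤ W}.ncard = m + Q)
    (p : Projectivization K (Fin 4 → K)) :
    (p ∈ P0 →
      {W : Submodule K (Fin 4 → K) | Module.finrank K W = 3 ∧
        {r ∈ P0 | r.submodule ≤ W}.ncard = m + Q ∧ p.submodule ≤ W}.ncard = m + Q) ∧
    (p ∉ P0 →
      {W : Submodule K (Fin 4 → K) | Module.finrank K W = 3 ∧
        {r ∈ P0 | r.submodule ≤ W}.ncard = m + Q ∧ p.submodule ≤ W}.ncard = m) := by
  subst hQ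
  have hcount := stmt_14_general (n := 1) (Module.finrank_fin_fun K) m P0
    (by simpa [Finset.sum_range_succ, add_comm] using hcard) (by simpa using hplanes) p
  constructor <;> intro hp <;> simpa [hp] using hcount
end

section
/- Let x be a natural number and let (P₀, P₂) satisfy Property(x) in PG(3,q). If ℓ is a line of PG(3,q) such that the number of planes of P₂ containing ℓ is strictly greater than x, then every point of ℓ belongs to P₀. -/
open scoped Classical

theorem antitone_ncard_sep_le {α : Type*} [Preorder α] {S : Set α} (hS : S.Finite) :
    Antitone fun a ↦ {c ∈ S | a ≤ c}.ncard :=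
  fun _ _ hab ↦ Set.ncard_le_ncard (fun _ hc ↦ ⟨hc.1, hab.trans hc.2⟩) (hS.sep _)

section

variable {F : Type*} [Field F] {Q x : ℕ} {P0 : Set (Projectivization F (Fin 4 → F))}
  {P2 : Set (Submodule F (Fin 4 → F))}

theorem PropertyX.mem_of_lt_ncard (h : PropertyX F Q x P0 P2)
    {p : Projectivization F (Fin 4 → F)} (hp : x < {W ∈ P2 | p.submodule ≤ W}.ncard) :
    p ∈ P0 := by
  obtain ⟨-, -, planes_through_point, mem_iff⟩ := h
  exact (mem_iff p).2 ((planes_through_point p).resolve_left hp.ne')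

theorem stmt_16_general [Finite F] (h : PropertyX F Q x P0 P2)
    {U : Submodule F (Fin 4 → F)} (hU : x < {W ∈ P2 | U ≤ W}.ncard)
    {p : Projectivization F (Fin 4 → F)} (hp : p.submodule ≤ U) : p ∈ P0 :=
  h.mem_of_lt_ncard (hU.trans_le (antitone_ncard_sep_le P2.toFinite hp))

end

/-- If (P₀, P₂) satisfies Property(x) in PG(3,q) and ℓ is a line lying on
strictly more than x planes of P₂, then every point of ℓ belongs to P₀. -/
theorem stmt_16 (F : Type*) [Field F] [Fintype F] (q : ℕ) (hq : q = Fintype.card F)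
    (x : ℕ)
    (P0 : Set (Projectivization F (Fin 4 → F)))
    (P2 : Set (Submodule F (Fin 4 → F)))
    (hprop : PropertyX F q x P0 P2)
    (ℓ : Submodule F (Fin 4 → F)) (hℓ : Module.finrank F ℓ = 2)
    (hcount : x < {W ∈ P2 | ℓ ≤ W}.ncard) :
    ∀ p : Projectivization F (Fin 4 → F), p.submodule ≤ ℓ → p ∈ P0 :=
  fun _ hp ↦ stmt_16_general hprop hcount hp
end

section
/- Let x be a natural number with x ≤ q, and let (P₀, P₂) satisfy Property(x) in PG(3,q). If ℓ is a line of PG(3,q) all of whose points belong to P₀, then every plane of PG(3,q) containing ℓ belongs to P₂. -/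
open scoped Classical

open scoped LinearAlgebra.Projectivization

section PointsOfSubspace

variable {K V : Type*} [DivisionRing K] [AddCommGroup V] [Module K V]

lemma range_projectivizationMap_subtype (U : Submodule K V) :
    Set.range (Projectivization.map U.subtype U.injective_subtype) =
      (U.projectivization : Set (ℙ K V)) := by
  apply Set.Subset.antisymm
  · rintro _ ⟨p, rfl⟩
    induction p with
    | h u _ => exact u.2
  · intro p hp
    induction p with
    | h v hv =>
      have hvU : v ∈ U := (U.mk_mem_projectivization_iff hv).1 hp
      exact ⟨.mk K ⟨v, hvU⟩ (by simpa using hv), rfl⟩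

lemma ncard_projectivization_s17 (U : Submodule K V) :
    (U.projectivization : Set (ℙ K V)).ncard = Nat.card (ℙ K U) := by
  rw [← range_projectivizationMap_subtype]
  exact Set.ncard_range_of_injective (Projectivization.map_injective _ _)

lemma finite_projectivization (U : Submodule K V) [Finite U] :
    (U.projectivization : Set (ℙ K V)).Finite := by
  rw [← range_projectivizationMap_subtype]
  exact Set.finite_range _

lemma card_projectivization_le_ncard_sep {P : Set (ℙ K V)} {U W : Submodule K V} [Finite W]
    (hUP : ∀ p : ℙ K V, p.submodule ≤ U → p ∈ P) (hUW : U ≤ W) :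
    Nat.card (ℙ K U) ≤ {p ∈ P | p.submodule ≤ W}.ncard := by
  have hsub : (U.projectivization : Set (ℙ K V)) ⊆ {p ∈ P | p.submodule ≤ W} := by
    intro p hp
    have hpU : p.submodule ≤ U := (U.mem_projectivization_iff_submodule_le p).1 hp
    exact ⟨hUP p hpU, hpU.trans hUW⟩
  have hfin : {p ∈ P | p.submodule ≤ W}.Finite :=
    (finite_projectivization W).subset fun p hp =>
      (W.mem_projectivization_iff_submodule_le p).2 hp.2
  exact (ncard_projectivization_s17 U).ge.trans (Set.ncard_le_ncard hsub hfin)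

end PointsOfSubspace

theorem stmt_17_general {K V : Type*} [Field K] [Finite K] [AddCommGroup V] [Module K V]
    {d x y : ℕ} (hx : x ≤ Nat.card K) {P₀ : Set (ℙ K V)} {P₂ : Set (Submodule K V)}
    (hP₀ : ∀ W : Submodule K V, Module.finrank K W = d →
      {p ∈ P₀ | p.submodule ≤ W}.ncard = x ∨ {p ∈ P₀ | p.submodule ≤ W}.ncard = y)
    (hP₂ : ∀ W : Submodule K V,
      W ∈ P₂ ↔ Module.finrank K W = d ∧ {p ∈ P₀ | p.submodule ≤ W}.ncard = y)
    {ℓ : Submodule K V} (hℓ : Module.finrank K ℓ = 2)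
    (hpts : ∀ p : ℙ K V, p.submodule ≤ ℓ → p ∈ P₀)
    (W : Submodule K V) [FiniteDimensional K W] (hW : Module.finrank K W = d) (hℓW : ℓ ≤ W) :
    W ∈ P₂ := by
  have : Finite W := Module.finite_of_finite K
  have hlt : x < {p ∈ P₀ | p.submodule ≤ W}.ncard :=
    calc
      x < Nat.card K + 1 := Nat.lt_succ_of_le hx
      _ = Nat.card (ℙ K ℓ) := (Projectivization.card_of_finrank_two K ℓ hℓ).symm
      _ ≤ {p ∈ P₀ | p.submodule ≤ W}.ncard := card_projectivization_le_ncard_sep hpts hℓW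
  exact (hP₂ W).2 ⟨hW, (hP₀ W hW).resolve_left hlt.ne'⟩

/-- Let x ≤ q and let (P₀, P₂) satisfy Property(x) in PG(3,q). If ℓ is a line
all of whose points belong to P₀, then every plane containing ℓ belongs to P₂. -/
theorem stmt_17 (F : Type*) [Field F] [Fintype F] (q : ℕ) (hq : q = Fintype.card F)
    (x : ℕ) (hx : x ≤ q)
    (P0 : Set (Projectivization F (Fin 4 → F)))
    (P2 : Set (Submodule F (Fin 4 → F)))
    (hprop : PropertyX F q x P0 P2)
    (ℓ : Submodule F (Fin 4 → F)) (hℓ : Module.finrank F ℓ = 2)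
    (hpts : ∀ p : Projectivization F (Fin 4 → F), p.submodule ≤ ℓ → p ∈ P0) :
    ∀ W : Submodule F (Fin 4 → F), Module.finrank F W = 3 → ℓ ≤ W → W ∈ P2 := by
  have hxF : x ≤ Nat.card F := hx.trans_eq (hq.trans Fintype.card_eq_nat_card)
  exact fun W => stmt_17_general hxF hprop.1 hprop.2.1 hℓ hpts W
end

section
/- Let x ≥ 1 be a natural number and let (P₀, P₂) satisfy Property(x) in PG(3,q). Suppose ℓ is a line of PG(3,q) such that every point of ℓ belongs to P₀ and every plane containing ℓ belongs to P₂. Then the pair (P₀ minus the points of ℓ, P₂ minus the planes containing ℓ) satisfies Property(x−1) in PG(3,q). -/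
open scoped Classical

/-!
The points of a line `ℓ` and the planes through `ℓ` themselves form a pair with Property(1): a plane
meets `ℓ` in one point unless it contains `ℓ`, and dually a point off `ℓ` spans a single plane with
`ℓ`. Property(x) says that the incidence counts take the values `x` and `q + x`, the larger one
exactly on the members of the pair. Removing a nested pair with Property(y) therefore lowers the
counts by `q + y` on the removed elements, from `q + x` to `x - y`, and by `y` on all others.
-/

open scoped LinearAlgebra.Projectivization

section TwoIntersection

variable {α β : Type*} {I : α → β → Prop} {B T T' : Set β} {S S' : Set α} {n m k : ℕ}

/-- Every block in `B` is incident with `m` or `n + m` elements of `S`, with `n + m` occurring on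
`T ⊆ B` and `m` on the rest of `B`; thus `S` is a set with two intersection numbers. The incidence
relation `I` is arbitrary, so that points and planes can exchange roles. -/
structure IsTwoIntersectionSet (I : α → β → Prop) (B : Set β) (n m : ℕ) (S : Set α) (T : Set β) :
    Prop where
  subset : T ⊆ B
  ncard_of_mem : ∀ b ∈ T, {a ∈ S | I a b}.ncard = n + m
  ncard_of_notMem : ∀ b ∈ B, b ∉ T → {a ∈ S | I a b}.ncard = m

theorem isTwoIntersectionSet_iff (hn : n ≠ 0) :
    IsTwoIntersectionSet I B n m S T ↔
      (∀ b ∈ B, {a ∈ S | I a b}.ncard = m ∨ {a ∈ S | I a b}.ncard = n + m) ∧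
        ∀ b, b ∈ T ↔ b ∈ B ∧ {a ∈ S | I a b}.ncard = n + m := by
  constructor
  · intro h
    refine ⟨fun b hb => ?_, fun b => ⟨fun hb => ⟨h.subset hb, h.ncard_of_mem b hb⟩, ?_⟩⟩
    · by_cases hbT : b ∈ T
      · exact .inr (h.ncard_of_mem b hbT)
      · exact .inl (h.ncard_of_notMem b hb hbT)
    · rintro ⟨hb, hcard⟩
      by_contra hbT
      have := h.ncard_of_notMem b hb hbT
      omega
  · rintro ⟨hcard, hT⟩
    exact ⟨fun b hb => ((hT b).1 hb).1, fun b hb => ((hT b).1 hb).2,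
      fun b hb hbT => (hcard b hb).resolve_right fun h => hbT ((hT b).2 ⟨hb, h⟩)⟩

theorem IsTwoIntersectionSet.sdiff (h : IsTwoIntersectionSet I B n (m + k) S T)
    (h' : IsTwoIntersectionSet I B n k S' T') (hfin : S'.Finite) (hS : S' ⊆ S) (hT : T' ⊆ T) :
    IsTwoIntersectionSet I B n m (S \ S') (T \ T') := by
  have ncard_sdiff (b : β) : {a ∈ S \ S' | I a b}.ncard
      = {a ∈ S | I a b}.ncard - {a ∈ S' | I a b}.ncard := by
    have hsub : {a ∈ S' | I a b} ⊆ {a ∈ S | I a b} := fun a ha => ⟨hS ha.1, ha.2⟩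
    rw [← Set.ncard_sdiff hsub (hfin.subset fun a ha => ha.1)]
    congr 1
    ext a
    simp only [Set.mem_sdiff, Set.mem_ofPred_eq]
    tauto
  refine ⟨Set.sdiff_subset.trans h.subset, fun b hb => ?_, fun b hb hb' => ?_⟩
  · rw [ncard_sdiff, h.ncard_of_mem b hb.1, h'.ncard_of_notMem b (h.subset hb.1) hb.2]
    omega
  · rw [ncard_sdiff]
    by_cases hbT' : b ∈ T'
    · rw [h.ncard_of_mem b (hT hbT'), h'.ncard_of_mem b hbT']
      omega
    · rw [h.ncard_of_notMem b hb fun hbT => hb' ⟨hbT, hbT'⟩, h'.ncard_of_notMem b hb hbT']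
      omega

end TwoIntersection

section Counting

open Module

variable {F V : Type*} [Field F] [AddCommGroup V] [Module F V]

theorem range_map_subtype_eq_setOf_submodule_le (U : Submodule F V) :
    Set.range (Projectivization.map U.subtype U.injective_subtype)
      = {p : ℙ F V | p.submodule ≤ U} := by
  ext p
  constructor
  · rintro ⟨u, rfl⟩
    induction u using Projectivization.ind with | h u _ =>
    simp [Projectivization.map_mk]
  · intro hp
    induction p using Projectivization.ind with | h v hv =>
    have hvU : v ∈ U := by simpa using hp
    exact ⟨.mk F ⟨v, hvU⟩ fun h => hv (congrArg Subtype.val h), rfl⟩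

theorem ncard_setOf_submodule_le [Finite F] (U : Submodule F V) :
    {p : ℙ F V | p.submodule ≤ U}.ncard = ∑ i ∈ Finset.range (finrank F U), Nat.card F ^ i := by
  rw [← range_map_subtype_eq_setOf_submodule_le, ← Set.image_univ,
    Set.ncard_image_of_injective _ (Projectivization.map_injective _ U.injective_subtype),
    Set.ncard_univ, Projectivization.card_of_finrank F U rfl]

variable (F V) in
/-- The set of hyperplanes of the projective space of `V`, as linear subspaces of codimension one;
in `PG(3,q)` these are the planes. -/
def hyperplanes : Set (Submodule F V) :=
  {W | finrank F W + 1 = finrank F V}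

variable [FiniteDimensional F V]

-- Duality: a point of the dual space is a hyperplane, and annihilators reverse inclusion.
theorem image_dualCoannihilator_eq_setOf_mem_hyperplanes (U : Submodule F V) :
    (fun p : ℙ F (Dual F V) => p.submodule.dualCoannihilator) ''
        {p | p.submodule ≤ U.dualAnnihilator} = {W ∈ hyperplanes F V | U ≤ W} := by
  ext W
  constructor
  · rintro ⟨p, hp, rfl⟩
    have hrank := Subspace.finrank_add_finrank_dualCoannihilator_eq p.submodule
    rw [p.finrank_submodule, add_comm] at hrank
    exact ⟨hrank, Submodule.le_dualAnnihilator_iff_le_dualCoannihilator.1 hp⟩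
  · rintro ⟨hW, hUW⟩
    have hrank : finrank F W.dualAnnihilator = 1 :=
      Nat.add_left_cancel ((Subspace.finrank_add_finrank_dualAnnihilator_eq W).trans hW.symm)
    refine ⟨.mk'' W.dualAnnihilator hrank, ?_, ?_⟩
    · simpa using Submodule.dualAnnihilator_anti hUW
    · simp

theorem ncard_setOf_mem_hyperplanes_le [Finite F] (U : Submodule F V) :
    {W ∈ hyperplanes F V | U ≤ W}.ncard
      = ∑ i ∈ Finset.range (finrank F (V ⧸ U)), Nat.card F ^ i := by
  have injective_dualCoannihilator :
      Function.Injective fun p : ℙ F (Dual F V) => p.submodule.dualCoannihilator := by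
    intro p p' hpp'
    apply Projectivization.submodule_injective
    simpa only [Subspace.dualCoannihilator_dualAnnihilator_eq] using
      congrArg Submodule.dualAnnihilator hpp'
  rw [← image_dualCoannihilator_eq_setOf_mem_hyperplanes,
    Set.ncard_image_of_injective _ injective_dualCoannihilator, ncard_setOf_submodule_le,
    (Subspace.quotEquivAnnihilator U).finrank_eq]

theorem finrank_inf_add_one_of_mem_hyperplanes {U W : Submodule F V} (hW : W ∈ hyperplanes F V)
    (hUW : ¬U ≤ W) : finrank F ↥(U ⊓ W) + 1 = finrank F U := by
  have hlt : finrank F W < finrank F ↥(U ⊔ W) :=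
    Submodule.finrank_lt_finrank_of_lt (right_lt_sup.2 hUW)
  have hle := Submodule.finrank_le (U ⊔ W)
  have hsum := Submodule.finrank_sup_add_finrank_inf_eq U W
  have hrank : finrank F W + 1 = finrank F V := hW
  omega

theorem finrank_quotient_sup_submodule_add_one {U : Submodule F V} {p : ℙ F V}
    (hp : ¬p.submodule ≤ U) : finrank F (V ⧸ U ⊔ p.submodule) + 1 = finrank F (V ⧸ U) := by
  have hlt : finrank F U < finrank F ↥(U ⊔ p.submodule) :=
    Submodule.finrank_lt_finrank_of_lt (left_lt_sup.2 hp)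
  have hle := Submodule.finrank_add_le_finrank_add_finrank U p.submodule
  have hquot := (U ⊔ p.submodule).finrank_quotient_add_finrank
  have hquot' := U.finrank_quotient_add_finrank
  have hrank := p.finrank_submodule
  omega

theorem isTwoIntersectionSet_points [Finite F] {d : ℕ} {U : Submodule F V}
    (hU : finrank F U = d + 1) :
    IsTwoIntersectionSet (fun (p : ℙ F V) W => p.submodule ≤ W) (hyperplanes F V)
      (Nat.card F ^ d) (∑ i ∈ Finset.range d, Nat.card F ^ i)
      {p | p.submodule ≤ U} {W ∈ hyperplanes F V | U ≤ W} := by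
  have ncard_eq (W : Submodule F V) : {p ∈ {p : ℙ F V | p.submodule ≤ U} | p.submodule ≤ W}.ncard
      = ∑ i ∈ Finset.range (finrank F ↥(U ⊓ W)), Nat.card F ^ i := by
    simp only [← ncard_setOf_submodule_le, Set.mem_ofPred_eq, le_inf_iff]
  refine ⟨fun W hW => hW.1, fun W hW => ?_, fun W hW hUW => ?_⟩
  · rw [ncard_eq, inf_eq_left.2 hW.2, hU, Finset.sum_range_succ, add_comm]
  · have hrank := finrank_inf_add_one_of_mem_hyperplanes hW fun h => hUW ⟨hW, h⟩
    rw [ncard_eq, Nat.add_right_cancel (hrank.trans hU)]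

theorem isTwoIntersectionSet_hyperplanes [Finite F] {d : ℕ} {U : Submodule F V}
    (hU : finrank F (V ⧸ U) = d + 1) :
    IsTwoIntersectionSet (fun W (p : ℙ F V) => p.submodule ≤ W) Set.univ
      (Nat.card F ^ d) (∑ i ∈ Finset.range d, Nat.card F ^ i)
      {W ∈ hyperplanes F V | U ≤ W} {p | p.submodule ≤ U} := by
  have ncard_eq (p : ℙ F V) : {W ∈ {W ∈ hyperplanes F V | U ≤ W} | p.submodule ≤ W}.ncard
      = ∑ i ∈ Finset.range (finrank F (V ⧸ U ⊔ p.submodule)), Nat.card F ^ i := by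
    simp only [← ncard_setOf_mem_hyperplanes_le, Set.mem_ofPred_eq, sup_le_iff, and_assoc]
  refine ⟨Set.subset_univ _, fun p hp => ?_, fun p _ hp => ?_⟩
  · rw [ncard_eq, sup_eq_left.2 hp, hU, Finset.sum_range_succ, add_comm]
  · have hrank := finrank_quotient_sup_submodule_add_one hp
    rw [ncard_eq, Nat.add_right_cancel (hrank.trans hU)]

end Counting

section PropertyX

variable {F : Type*} [Field F]

theorem mem_hyperplanes_fin_four {W : Submodule F (Fin 4 → F)} :
    W ∈ hyperplanes F (Fin 4 → F) ↔ Module.finrank F W = 3 := by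
  simp [hyperplanes]

variable {Q x y : ℕ} {P0 L0 : Set (ℙ F (Fin 4 → F))} {P2 L2 : Set (Submodule F (Fin 4 → F))}

theorem propertyX_iff (hQ : Q ≠ 0) :
    PropertyX F Q x P0 P2 ↔
      IsTwoIntersectionSet (fun p W => p.submodule ≤ W) (hyperplanes F (Fin 4 → F)) Q x P0 P2 ∧
        IsTwoIntersectionSet (fun W p => p.submodule ≤ W) Set.univ Q x P2 P0 := by
  simp only [PropertyX, isTwoIntersectionSet_iff hQ, mem_hyperplanes_fin_four, Set.mem_univ,
    true_and, forall_const, and_assoc]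

theorem PropertyX.sdiff [Finite F] (hQ : Q ≠ 0) (hP : PropertyX F Q (x + y) P0 P2)
    (hL : PropertyX F Q y L0 L2) (h0 : L0 ⊆ P0) (h2 : L2 ⊆ P2) :
    PropertyX F Q x (P0 \ L0) (P2 \ L2) := by
  rw [propertyX_iff hQ] at hP hL ⊢
  exact ⟨hP.1.sdiff hL.1 L0.toFinite h0 h2, hP.2.sdiff hL.2 L2.toFinite h2 h0⟩

theorem propertyX_one_of_finrank_eq_two [Finite F] {ℓ : Submodule F (Fin 4 → F)}
    (hℓ : Module.finrank F ℓ = 2) :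
    PropertyX F (Nat.card F) 1 {p | p.submodule ≤ ℓ} {W | Module.finrank F W = 3 ∧ ℓ ≤ W} := by
  have hquot : Module.finrank F ((Fin 4 → F) ⧸ ℓ) = 2 := by
    have := ℓ.finrank_quotient_add_finrank
    rw [hℓ, Module.finrank_fin_fun] at this
    omega
  rw [propertyX_iff Nat.card_pos.ne']
  simpa [mem_hyperplanes_fin_four] using
    And.intro (isTwoIntersectionSet_points hℓ) (isTwoIntersectionSet_hyperplanes hquot)

end PropertyX

/-- Let x ≥ 1 and let (P₀, P₂) satisfy Property(x) in PG(3,q). If ℓ is a line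
such that every point of ℓ belongs to P₀ and every plane containing ℓ belongs
to P₂, then (P₀ minus the points of ℓ, P₂ minus the planes containing ℓ)
satisfies Property(x−1). -/
theorem stmt_18 (F : Type*) [Field F] [Fintype F] (q : ℕ) (hq : q = Fintype.card F)
    (x : ℕ) (hx : 1 ≤ x)
    (P0 : Set (Projectivization F (Fin 4 → F)))
    (P2 : Set (Submodule F (Fin 4 → F)))
    (hprop : PropertyX F q x P0 P2)
    (ℓ : Submodule F (Fin 4 → F)) (hℓ : Module.finrank F ℓ = 2)
    (hpts : ∀ p : Projectivization F (Fin 4 → F), p.submodule ≤ ℓ → p ∈ P0)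
    (hpls : ∀ W : Submodule F (Fin 4 → F), Module.finrank F W = 3 → ℓ ≤ W → W ∈ P2) :
    PropertyX F q (x - 1)
      (P0 \ {p : Projectivization F (Fin 4 → F) | p.submodule ≤ ℓ})
      (P2 \ {W : Submodule F (Fin 4 → F) | ℓ ≤ W}) := by
  obtain ⟨y, rfl⟩ := Nat.exists_eq_add_of_le' hx
  have hline : PropertyX F q 1 {p | p.submodule ≤ ℓ} {W | Module.finrank F W = 3 ∧ ℓ ≤ W} := by
    rw [hq, ← Nat.card_eq_fintype_card]
    exact propertyX_one_of_finrank_eq_two hℓ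
  have hplanes : P2 \ {W | ℓ ≤ W} = P2 \ {W | Module.finrank F W = 3 ∧ ℓ ≤ W} := by
    ext W
    have hfinrank : W ∈ P2 → Module.finrank F W = 3 := fun hW => ((hprop.2.1 W).1 hW).1
    simp only [Set.mem_sdiff, Set.mem_ofPred_eq]
    tauto
  rw [hplanes]
  have hq0 : q ≠ 0 := hq ▸ Fintype.card_ne_zero
  exact hprop.sdiff hq0 hline hpts fun W hW => hpls W hW.1 hW.2
end

section
/- Let x ≥ 1 be a natural number with (x−1)² < q (equivalently, x < √q + 1), and let (P₀, P₂) satisfy Property(x) in PG(3,q). Then there exist x pairwise disjoint lines ℓ₁, …, ℓ_x of PG(3,q) such that P₀ is exactly the set of points lying on at least one of the lines ℓᵢ and P₂ is exactly the set of planes containing at least one of the lines ℓᵢ. (Under the Klein correspondence this says: every Cameron–Liebler set of generators of the Klein quadric Q⁺(5,q) with parameter x < √q + 1 is the union of x point-pencils whose vertices are pairwise non-collinear.) -/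
open scoped Classical

/-!
Counting the planes through a point of `P₀` shows `|P₀| = x (q + 1)`, and counting in the pencil of
planes on a line `ℓ` then shows that `ℓ` carries as many points of `P₀` as there are planes of
`P₂` through it. Hence the `q + x` points of `P₀` in a plane of `P₂` block its lines. A blocking set
containing no line is large (Bruen), so when `(x - 1)² < q` some line is contained in `P₀`. Removing
its points leaves a set of the same kind with parameter `x - 1`, and one concludes by induction.
-/

namespace CameronLiebler

open Module Finset
open scoped LinearAlgebra.Projectivization

section ProjectivePlane
open Configuration Configuration.ProjectivePlane

variable {P L : Type*} [Membership P L] [ProjectivePlane P L] [Finite P]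

section IncidenceSums

variable [Fintype L]

lemma card_lines_through (p : P) : #{l : L | p ∈ l} = order P L + 1 := by
  rw [← lineCount_eq L p, lineCount, Nat.card_eq_fintype_card, Fintype.card_subtype]

lemma card_lines_through_pair (p r : P) :
    #{l : L | p ∈ l ∧ r ∈ l} = 1 + if p = r then order P L else 0 := by
  split_ifs with hpr
  · simp only [hpr, and_self, card_lines_through, add_comm]
  · exact (Fintype.existsUnique_iff_card_one _).1 (HasLines.existsUnique_line P L p r hpr)

lemma sum_card_filter_mem_through (S : Finset P) (p : P) :
    ∑ l : L with p ∈ l, #{r ∈ S | r ∈ l} = #S + if p ∈ S then order P L else 0 := by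
  calc ∑ l : L with p ∈ l, #{r ∈ S | r ∈ l}
      = ∑ r ∈ S, #{l ∈ {l : L | p ∈ l} | r ∈ l} :=
        (sum_card_bipartiteAbove_eq_sum_card_bipartiteBelow _).symm
    _ = ∑ r ∈ S, (1 + if p = r then order P L else 0) :=
        sum_congr rfl fun r _ => by rw [filter_filter, card_lines_through_pair]
    _ = _ := by rw [sum_add_distrib, ← card_eq_sum_ones, sum_ite_eq]

variable (L) in
lemma sum_card_filter_mem (S : Finset P) :
    ∑ l : L, #{r ∈ S | r ∈ l} = #S * (order P L + 1) := by
  calc ∑ l : L, #{r ∈ S | r ∈ l}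
      = ∑ r ∈ S, #{l : L | r ∈ l} :=
        (sum_card_bipartiteAbove_eq_sum_card_bipartiteBelow _).symm
    _ = #S * (order P L + 1) := sum_const_nat fun r _ => card_lines_through r

variable (L) in
lemma sum_card_filter_mem_sq (S : Finset P) :
    ∑ l : L, #{r ∈ S | r ∈ l} ^ 2 = #S * (#S + order P L) := by
  calc ∑ l : L, #{r ∈ S | r ∈ l} ^ 2
      = ∑ l : L, ∑ _p ∈ {p ∈ S | p ∈ l}, #{r ∈ S | r ∈ l} :=
        sum_congr rfl fun l _ => by rw [sum_const, smul_eq_mul, sq]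
    _ = ∑ p ∈ S, ∑ l : L with p ∈ l, #{r ∈ S | r ∈ l} :=
        sum_comm' fun l p => by simp only [mem_filter, mem_univ, true_and, and_comm]
    _ = #S * (#S + order P L) :=
        sum_const_nat fun p hp => by rw [sum_card_filter_mem_through, if_pos hp]

end IncidenceSums

variable [Finite L]

lemma card_filter_mem_add_order_le {S : Finset P} (hS : ∀ l : L, ∃ p ∈ S, p ∈ l)
    {p : P} {l : L} (hpS : p ∉ S) (hpl : p ∈ l) : #{r ∈ S | r ∈ l} + order P L ≤ #S := by
  cases nonempty_fintype L
  have hl : l ∈ ({l | p ∈ l} : Finset L) := by simpa only [mem_filter_univ]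
  have horder : order P L ≤ ∑ k ∈ ({l | p ∈ l} : Finset L).erase l, #{r ∈ S | r ∈ k} := by
    calc order P L = ∑ k ∈ ({l | p ∈ l} : Finset L).erase l, 1 := by
          rw [← card_eq_sum_ones, card_erase_of_mem hl, card_lines_through, Nat.add_sub_cancel]
      _ ≤ _ := sum_le_sum fun k _ => card_pos.2 (filter_nonempty_iff.2 (hS k))
  have hsum := sum_card_filter_mem_through (L := L) S p
  rw [if_neg hpS, ← add_sum_erase _ _ hl] at hsum
  omega

/-- **Bruen's theorem** on blocking sets. If no line is contained in `S`, every line meets `S` in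
between `1` and `y + 1` points, so `∑ (m - 1) (m - (y + 1)) ≤ 0` over the intersection numbers `m`;
but double counting evaluates this sum to `n (n - y²)`, where `n` is the order of the plane. -/
theorem exists_line_forall_mem_of_blocking {S : Finset P} {y : ℕ}
    (hS : ∀ l : L, ∃ p ∈ S, p ∈ l) (hcard : #S = order P L + y + 1) (hy : y ^ 2 < order P L) :
    ∃ l : L, ∀ p ∈ l, p ∈ S := by
  cases nonempty_fintype L
  by_contra! hline
  let m (l : L) : ℕ := #{r ∈ S | r ∈ l}
  have hm_ge (l : L) : 1 ≤ m l := card_pos.2 (filter_nonempty_iff.2 (hS l))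
  have hm_le (l : L) : m l ≤ y + 1 := by
    obtain ⟨p, hpl, hpS⟩ := hline l
    have : m l + order P L ≤ #S := card_filter_mem_add_order_le hS hpS hpl
    omega
  have hnonpos : ∑ l, ((m l : ℤ) - 1) * (m l - (y + 1)) ≤ 0 := sum_nonpos fun l _ =>
    mul_nonpos_of_nonneg_of_nonpos (sub_nonneg.2 (mod_cast hm_ge l))
      (sub_nonpos.2 (mod_cast hm_le l))
  have hsum : ∑ l, (m l : ℤ) = #S * (order P L + 1) := mod_cast sum_card_filter_mem L S
  have hsum_sq : ∑ l, (m l : ℤ) ^ 2 = #S * (#S + order P L) :=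
    mod_cast sum_card_filter_mem_sq L S
  have hlines : (Fintype.card L : ℤ) = order P L ^ 2 + order P L + 1 := mod_cast card_lines P L
  have hexpand : ∑ l, ((m l : ℤ) - 1) * (m l - (y + 1)) = order P L * (order P L - y ^ 2) := by
    calc ∑ l, ((m l : ℤ) - 1) * (m l - (y + 1))
        = ∑ l, ((m l : ℤ) ^ 2 - (y + 2) * m l + (y + 1)) := sum_congr rfl fun l _ => by ring
      _ = ∑ l, (m l : ℤ) ^ 2 - (y + 2) * ∑ l, (m l : ℤ) + Fintype.card L * (y + 1) := by
          rw [sum_add_distrib, sum_sub_distrib, ← mul_sum, sum_const, card_univ, nsmul_eq_mul]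
      _ = order P L * (order P L - y ^ 2) := by
          rw [hsum, hsum_sq, hlines, hcard]
          push_cast
          ring
  have horder : (0 : ℤ) < order P L := mod_cast zero_lt_one.trans (one_lt_order P L)
  have hpos : (0 : ℤ) < order P L * (order P L - y ^ 2) :=
    mul_pos horder (sub_pos.2 (mod_cast hy))
  exact (hexpand ▸ hnonpos).not_gt hpos

end ProjectivePlane

section Subspaces

variable {F V : Type*} [Field F] [AddCommGroup V] [Module F V]

lemma submodule_map {W : Type*} [AddCommGroup W] [Module F W] (f : V →ₗ[F] W)
    (hf : Function.Injective f) (p : ℙ F V) : (p.map f hf).submodule = p.submodule.map f := by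
  induction p with
  | h v hv => simp only [Projectivization.map_mk, Projectivization.submodule_mk, Submodule.map_span,
      Set.image_singleton]

lemma submodule_map_subtype_le_iff {W : Submodule F V} {A : Submodule F W} {p : ℙ F W} :
    (p.map W.subtype W.injective_subtype).submodule ≤ A.map W.subtype ↔ p.submodule ≤ A := by
  rw [submodule_map, Submodule.map_le_map_iff_of_injective W.injective_subtype]

lemma range_map_subtype (A : Submodule F V) :
    Set.range (Projectivization.map A.subtype A.injective_subtype) =
      {p : ℙ F V | p.submodule ≤ A} := by
  ext p
  refine ⟨?_, fun hp => ?_⟩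
  · rintro ⟨p, rfl⟩
    exact (submodule_map _ _ _).trans_le (Submodule.map_subtype_le A _)
  · induction p with
    | h v hv =>
      have hvA : v ∈ A := by simpa using hp
      exact ⟨.mk F ⟨v, hvA⟩ (by simpa using hv), rfl⟩

lemma submodule_le_submodule_iff {p r : ℙ F V} : p.submodule ≤ r.submodule ↔ p = r :=
  ⟨fun h => Projectivization.submodule_injective <|
    Submodule.eq_of_le_of_finrank_eq h (by simp only [Projectivization.finrank_submodule]),
    fun h => h ▸ le_rfl⟩

lemma finrank_sup_submodule [FiniteDimensional F V] {A : Submodule F V} {p : ℙ F V}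
    (hp : ¬ p.submodule ≤ A) : finrank F ↥(A ⊔ p.submodule) = finrank F A + 1 := by
  have hatom : IsAtom p.submodule := Submodule.isAtom_iff_finrank_eq_one.2 p.finrank_submodule
  have hdisj : A ⊓ p.submodule = ⊥ := (hatom.not_le_iff_disjoint.1 hp).symm.eq_bot
  have := Submodule.finrank_sup_add_finrank_inf_eq A p.submodule
  rw [hdisj, finrank_bot, p.finrank_submodule] at this
  exact this

lemma finrank_inf_add_one [FiniteDimensional F V] {A U : Submodule F V}
    (hU : finrank F U + 1 = finrank F V) (hA : ¬ A ≤ U) :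
    finrank F ↥(A ⊓ U) + 1 = finrank F A := by
  have hlt : finrank F U < finrank F ↥(A ⊔ U) :=
    Submodule.finrank_lt_finrank_of_lt (right_lt_sup.2 hA)
  have hle := (A ⊔ U).finrank_le
  have := Submodule.finrank_sup_add_finrank_inf_eq A U
  omega

section ProjectivePlaneOfLines
open Configuration

/-- The lines of the projective space of `V`. -/
abbrev Line (F V : Type*) [Field F] [AddCommGroup V] [Module F V] :=
  {l : Submodule F V // finrank F l = 2}

instance : Membership (ℙ F V) (Line F V) := ⟨fun l p => p.submodule ≤ l⟩

lemma mem_line {p : ℙ F V} {l : Line F V} : p ∈ l ↔ p.submodule ≤ l := Iff.rfl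

lemma finrank_sup_submodule_eq_two [FiniteDimensional F V] {p r : ℙ F V} (hpr : p ≠ r) :
    finrank F ↥(p.submodule ⊔ r.submodule) = 2 := by
  rw [finrank_sup_submodule, p.finrank_submodule]
  exact fun h => hpr.symm (submodule_le_submodule_iff.1 h)

/-- The line joining two distinct points. -/
noncomputable def Line.through [FiniteDimensional F V] {p r : ℙ F V} (hpr : p ≠ r) : Line F V :=
  ⟨p.submodule ⊔ r.submodule, finrank_sup_submodule_eq_two hpr⟩

lemma finrank_inf_eq_one [FiniteDimensional F V] (hV : finrank F V = 3) {l k : Line F V}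
    (hlk : l ≠ k) : finrank F ↥(l.1 ⊓ k.1) = 1 := by
  have hle : ¬ l.1 ≤ k.1 := fun h =>
    hlk (Subtype.ext (Submodule.eq_of_le_of_finrank_eq h (l.2.trans k.2.symm)))
  have := finrank_inf_add_one (by rw [k.2, hV]) hle
  have := l.2
  omega

lemma nondegenerate (hV : finrank F V = 3) : Nondegenerate (ℙ F V) (Line F V) where
  exists_point l := by
    have hl : l.1 < ⊤ := lt_top_iff_ne_top.2 fun h => by
      have := l.2
      rw [h, finrank_top] at this
      omega
    obtain ⟨v, -, hv⟩ := SetLike.exists_of_lt hl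
    refine ⟨.mk F v fun h => hv (h ▸ zero_mem _), ?_⟩
    simpa [mem_line] using hv
  exists_line p := by
    have : FiniteDimensional F V := .of_finrank_pos (by omega)
    obtain ⟨l, hl⟩ := exists_isCompl p.submodule
    refine ⟨⟨l, ?_⟩, fun h => ?_⟩
    · have := Submodule.finrank_add_eq_of_isCompl hl
      rw [p.finrank_submodule] at this
      omega
    · have := p.finrank_submodule
      rw [hl.disjoint.eq_bot_of_le h, finrank_bot] at this
      omega
  eq_or_eq {p r l k} hpl hrl hpk hrk := by
    have : FiniteDimensional F V := .of_finrank_pos (by omega)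
    refine or_iff_not_imp_left.2 fun hpr => Subtype.ext ?_
    have hspan {j : Line F V} (hpj : p ∈ j) (hrj : r ∈ j) : p.submodule ⊔ r.submodule = j.1 :=
      Submodule.eq_of_le_of_finrank_eq (sup_le hpj hrj)
        ((finrank_sup_submodule_eq_two hpr).trans j.2.symm)
    exact (hspan hpl hrl).symm.trans (hspan hpk hrk)

/-- The line of a projective plane with equation `f = 0`. -/
def Line.ker (hV : finrank F V = 3) (f : Dual F V) (hf : f ≠ 0) : Line F V :=
  ⟨LinearMap.ker f, by
    have : FiniteDimensional F V := .of_finrank_pos (by omega)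
    have := Dual.finrank_ker_add_one_of_ne_zero hf
    omega⟩

lemma mk_mem_line_ker (hV : finrank F V = 3) {f : Dual F V} (hf : f ≠ 0) {v : V} (hv : v ≠ 0) :
    Projectivization.mk F v hv ∈ Line.ker hV f hf ↔ f v = 0 := by
  simp [mem_line, Line.ker]

lemma exists_triangle (hV : finrank F V = 3) :
    ∃ (p₁ p₂ p₃ : ℙ F V) (l₁ l₂ l₃ : Line F V),
      p₁ ∉ l₂ ∧ p₁ ∉ l₃ ∧ p₂ ∉ l₁ ∧ p₂ ∈ l₂ ∧ p₂ ∈ l₃ ∧ p₃ ∉ l₁ ∧ p₃ ∈ l₂ ∧ p₃ ∉ l₃ := by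
  have : FiniteDimensional F V := .of_finrank_pos (by omega)
  let b : Basis (Fin 3) F V := finBasisOfFinrankEq F V hV
  have hcoord (i : Fin 3) : b.coord i ≠ 0 := fun h => by simpa using congr($h (b i))
  have hadd : b.coord 0 + b.coord 1 ≠ 0 := fun h => by simpa using congr($h (b 0))
  have hb : b 1 + b 2 ≠ 0 := fun h => by simpa using congr(b.coord 1 $h)
  refine ⟨.mk F (b 1 + b 2) hb, .mk F (b 0) (b.ne_zero 0), .mk F (b 1) (b.ne_zero 1),
    .ker hV _ hadd, .ker hV _ (hcoord 2), .ker hV _ (hcoord 1), ?_⟩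
  simp [mk_mem_line_ker]

/-- The projective plane of the points and lines of a three-dimensional vector space. -/
@[reducible]
noncomputable def projectivePlane (hV : finrank F V = 3) :
    ProjectivePlane (ℙ F V) (Line F V) :=
  have : FiniteDimensional F V := .of_finrank_pos (by omega)
  { nondegenerate hV with
    mkPoint := fun hlk => .mk'' _ (finrank_inf_eq_one hV hlk)
    mkPoint_ax := fun hlk => by simp [mem_line]
    mkLine := Line.through
    mkLine_ax := fun _ => ⟨le_sup_left (α := Submodule F V), le_sup_right (α := Submodule F V)⟩
    exists_config := exists_triangle hV }

end ProjectivePlaneOfLines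

end Subspaces

section Counting

variable {F V : Type*} [Field F] [AddCommGroup V] [Module F V]

lemma exists_le_finrank_eq [FiniteDimensional F V] {A : Submodule F V} {n : ℕ}
    (hA : finrank F A ≤ n) (hn : n ≤ finrank F V) : ∃ B, A ≤ B ∧ finrank F B = n := by
  induction n, hA using Nat.le_induction with
  | base => exact ⟨A, le_rfl, rfl⟩
  | succ n _ ih =>
    obtain ⟨B, hAB, hB⟩ := ih (by omega)
    have hBtop : B < ⊤ := Submodule.lt_top_of_finrank_lt_finrank (by omega)
    obtain ⟨v, -, hv⟩ := SetLike.exists_of_lt hBtop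
    have hp : ¬ (Projectivization.mk F v fun h => hv (h ▸ zero_mem B)).submodule ≤ B := by
      simpa only [Projectivization.submodule_mk, Submodule.span_singleton_le_iff_mem] using hv
    exact ⟨_, hAB.trans le_sup_left, by rw [finrank_sup_submodule hp, hB]⟩

variable [Finite V]

/-- The points of the projective subspace `A`. -/
noncomputable def points (A : Submodule F V) : Finset (ℙ F V) :=
  {p : ℙ F V | p.submodule ≤ A}.toFinite.toFinset

@[simp]
lemma mem_points {A : Submodule F V} {p : ℙ F V} : p ∈ points A ↔ p.submodule ≤ A := by
  simp only [points, Set.Finite.mem_toFinset, Set.mem_ofPred_eq]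

lemma inter_points_top (P : Finset (ℙ F V)) : P ∩ points ⊤ = P :=
  inter_eq_left.2 fun _ _ => mem_points.2 le_top

lemma points_submodule (p : ℙ F V) : points p.submodule = {p} := by
  ext r
  rw [mem_points, mem_singleton, submodule_le_submodule_iff]

lemma points_inf (A B : Submodule F V) : points (A ⊓ B) = points A ∩ points B := by
  ext p
  simp only [mem_points, le_inf_iff, mem_inter]

lemma inf_eq_bot_of_disjoint_points {A B : Submodule F V} (h : Disjoint (points A) (points B)) :
    A ⊓ B = ⊥ := by
  refine (Submodule.eq_bot_iff _).2 fun v hv => by_contra fun hv0 => ?_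
  have hp : .mk F v hv0 ∈ points (A ⊓ B) := by
    simpa only [mem_points, Projectivization.submodule_mk, Submodule.span_singleton_le_iff_mem]
  rw [points_inf, disjoint_iff_inter_eq_empty.1 h] at hp
  exact notMem_empty _ hp

section Pencil

/-- The subspaces strictly between `A` and `B`. When `finrank F B = finrank F A + 2` this is a
pencil: the points of a line, the lines through a point in a plane, the planes through a line. -/
noncomputable def pencil (A B : Submodule F V) : Finset (Submodule F V) :=
  (Set.Ioo A B).toFinite.toFinset

lemma mem_pencil {A B C : Submodule F V} : C ∈ pencil A B ↔ A < C ∧ C < B := by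
  simp only [pencil, Set.Finite.mem_toFinset, Set.mem_Ioo]

variable {A B : Submodule F V}

lemma finrank_of_mem_pencil (hAB : finrank F B = finrank F A + 2) {C : Submodule F V}
    (hC : C ∈ pencil A B) : finrank F C = finrank F A + 1 := by
  obtain ⟨hAC, hCB⟩ := mem_pencil.1 hC
  have := Submodule.finrank_lt_finrank_of_lt hAC
  have := Submodule.finrank_lt_finrank_of_lt hCB
  omega

lemma mem_pencil_of_finrank (hAB : finrank F B = finrank F A + 2) {C : Submodule F V} (hAC : A ≤ C)
    (hCB : C ≤ B) (hC : finrank F C = finrank F A + 1) : C ∈ pencil A B := by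
  refine mem_pencil.2 ⟨hAC.lt_of_ne ?_, hCB.lt_of_ne ?_⟩ <;>
  · rintro rfl
    omega

lemma pencil_bot {D : Submodule F V} (hD : finrank F D = 2) :
    pencil ⊥ D = (points D).image Projectivization.submodule := by
  have hrank : finrank F D = finrank F (⊥ : Submodule F V) + 2 := by rw [hD, finrank_bot]
  ext C
  simp only [mem_image, mem_points]
  constructor
  · intro hC
    have hC1 : finrank F C = 1 := by rw [finrank_of_mem_pencil hrank hC, finrank_bot]
    exact ⟨.mk'' C hC1, by simpa using (mem_pencil.1 hC).2.le, by simp⟩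
  · rintro ⟨p, hpD, rfl⟩
    exact mem_pencil_of_finrank hrank bot_le hpD (by rw [p.finrank_submodule, finrank_bot])

lemma card_pencil_inf_left (A D : Submodule F V) :
    #(pencil (D ⊓ A) D) = #(pencil A (D ⊔ A)) := by
  simp only [pencil, ← Set.ncard_eq_toFinset_card, ← Nat.card_coe_set_eq]
  exact Nat.card_congr (infIooOrderIsoIooSup D A).toEquiv

variable [Finite F]

lemma card_points (A : Submodule F V) :
    #(points A) = ∑ i ∈ range (finrank F A), Nat.card F ^ i := by
  rw [points, ← Set.ncard_eq_toFinset_card, ← range_map_subtype,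
    Set.ncard_range_of_injective (Projectivization.map_injective _ _)]
  exact Projectivization.card_of_finrank F A rfl

lemma card_points_of_finrank_eq_two (hA : finrank F A = 2) : #(points A) = Nat.card F + 1 := by
  rw [card_points, hA, sum_range_succ, sum_range_one, pow_zero, pow_one, add_comm]

lemma card_points_of_finrank_eq_one (hA : finrank F A = 1) : #(points A) = 1 := by
  rw [card_points, hA, sum_range_one, pow_zero]

lemma card_pencil (hle : A ≤ B) (hAB : finrank F B = finrank F A + 2) :
    #(pencil A B) = Nat.card F + 1 := by
  obtain ⟨A', hA'⟩ := exists_isCompl A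
  have hinf : A' ⊓ B ⊓ A = ⊥ := by rw [inf_right_comm, hA'.symm.inf_eq_bot, bot_inf_eq]
  have hsup : A' ⊓ B ⊔ A = B := by
    rw [sup_comm, ← sup_inf_assoc_of_le A' hle, hA'.sup_eq_top, top_inf_eq]
  have hrank : finrank F ↥(A' ⊓ B) = 2 := by
    have := Submodule.finrank_sup_add_finrank_inf_eq (A' ⊓ B) A
    rw [hinf, hsup, finrank_bot] at this
    omega
  calc #(pencil A B) = #(pencil ⊥ (A' ⊓ B)) := by
        rw [← hinf, card_pencil_inf_left, hsup]
    _ = #(points (A' ⊓ B)) := by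
        rw [pencil_bot hrank, card_image_of_injective _ Projectivization.submodule_injective]
    _ = Nat.card F + 1 := card_points_of_finrank_eq_two hrank

lemma card_filter_pencil_submodule_le (hle : A ≤ B) (hAB : finrank F B = finrank F A + 2)
    (p : ℙ F V) : #{C ∈ pencil A B | p.submodule ≤ C} =
      (if p ∈ points B then 1 else 0) + if p ∈ points A then Nat.card F else 0 := by
  by_cases hpA : p.submodule ≤ A
  · have hall : {C ∈ pencil A B | p.submodule ≤ C} = pencil A B :=
      filter_true_of_mem fun C hC => hpA.trans (mem_pencil.1 hC).1.le
    rw [hall, card_pencil hle hAB, if_pos (mem_points.2 (hpA.trans hle)),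
      if_pos (mem_points.2 hpA), add_comm]
  rw [if_neg (mem_points.not.2 hpA), add_zero]
  split_ifs with hpB
  · refine card_eq_one.2 ⟨A ⊔ p.submodule, eq_singleton_iff_unique_mem.2 ⟨?_, ?_⟩⟩
    · exact mem_filter.2 ⟨mem_pencil_of_finrank hAB le_sup_left (sup_le hle (mem_points.1 hpB))
        (finrank_sup_submodule hpA), le_sup_right⟩
    · intro C hC
      obtain ⟨hC, hpC⟩ := mem_filter.1 hC
      refine (Submodule.eq_of_le_of_finrank_eq (sup_le (mem_pencil.1 hC).1.le hpC) ?_).symm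
      rw [finrank_sup_submodule hpA, finrank_of_mem_pencil hAB hC]
  · exact card_eq_zero.2 <| filter_false_of_mem fun C hC hpC =>
      hpB (mem_points.2 (hpC.trans (mem_pencil.1 hC).2.le))

lemma card_filter_pencil_le_hyperplane (hle : A ≤ B) (hAB : finrank F B = finrank F A + 2)
    {U : Submodule F V} (hU : finrank F U + 1 = finrank F V) : #{C ∈ pencil A B | C ≤ U} =
      (if A ≤ U then 1 else 0) + if B ≤ U then Nat.card F else 0 := by
  by_cases hBU : B ≤ U
  · have hall : {C ∈ pencil A B | C ≤ U} = pencil A B :=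
      filter_true_of_mem fun C hC => (mem_pencil.1 hC).2.le.trans hBU
    rw [hall, card_pencil hle hAB, if_pos (hle.trans hBU), if_pos hBU, add_comm]
  have hinf : finrank F ↥(B ⊓ U) = finrank F A + 1 := by
    have := finrank_inf_add_one hU hBU
    omega
  rw [if_neg hBU, add_zero]
  split_ifs with hAU
  · refine card_eq_one.2 ⟨B ⊓ U, eq_singleton_iff_unique_mem.2 ⟨?_, ?_⟩⟩
    · exact mem_filter.2
        ⟨mem_pencil_of_finrank hAB (le_inf hle hAU) inf_le_left hinf, inf_le_right⟩
    · intro C hC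
      obtain ⟨hC, hCU⟩ := mem_filter.1 hC
      refine Submodule.eq_of_le_of_finrank_eq (le_inf (mem_pencil.1 hC).2.le hCU) ?_
      rw [hinf, finrank_of_mem_pencil hAB hC]
  · exact card_eq_zero.2 <| filter_false_of_mem fun C hC hCU =>
      hAU ((mem_pencil.1 hC).1.le.trans hCU)

lemma sum_pencil_card_points (hle : A ≤ B) (hAB : finrank F B = finrank F A + 2)
    (P : Finset (ℙ F V)) :
    ∑ C ∈ pencil A B, #(P ∩ points C) = #(P ∩ points B) + Nat.card F * #(P ∩ points A) := by
  calc ∑ C ∈ pencil A B, #(P ∩ points C)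
      = ∑ C ∈ pencil A B, #{p ∈ P | p.submodule ≤ C} := by
        simp only [← filter_mem_eq_inter, mem_points]
    _ = ∑ p ∈ P, #{C ∈ pencil A B | p.submodule ≤ C} :=
        (sum_card_bipartiteAbove_eq_sum_card_bipartiteBelow _).symm
    _ = _ := by
        simp only [card_filter_pencil_submodule_le hle hAB, sum_add_distrib, ← sum_filter,
          sum_const, smul_eq_mul, mul_one, filter_mem_eq_inter, mul_comm]

lemma sum_pencil_card_hyperplanes (hle : A ≤ B) (hAB : finrank F B = finrank F A + 2)
    {Q : Finset (Submodule F V)} (hQ : ∀ U ∈ Q, finrank F U + 1 = finrank F V) :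
    ∑ C ∈ pencil A B, #{U ∈ Q | C ≤ U} = #{U ∈ Q | A ≤ U} + Nat.card F * #{U ∈ Q | B ≤ U} := by
  calc ∑ C ∈ pencil A B, #{U ∈ Q | C ≤ U}
      = ∑ U ∈ Q, #{C ∈ pencil A B | C ≤ U} := sum_card_bipartiteAbove_eq_sum_card_bipartiteBelow _
    _ = ∑ U ∈ Q, ((if A ≤ U then 1 else 0) + if B ≤ U then Nat.card F else 0) :=
        sum_congr rfl fun U hU => card_filter_pencil_le_hyperplane hle hAB (hQ U hU)
    _ = _ := by
        simp only [sum_add_distrib, ← sum_filter, sum_const, smul_eq_mul, mul_one, mul_comm]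

end Pencil

section Blocking

variable [Finite F]

lemma order_projectivePlane (hV : finrank F V = 3) :
    letI := projectivePlane hV
    Configuration.ProjectivePlane.order (ℙ F V) (Line F V) = Nat.card F := by
  let := projectivePlane hV
  obtain ⟨l, -, hl⟩ := exists_le_finrank_eq (F := F) (A := (⊥ : Submodule F V)) (n := 2)
    (by simp) (by omega)
  have hcount := Configuration.ProjectivePlane.pointCount_eq (ℙ F V) (⟨l, hl⟩ : Line F V)
  have hl_card : Configuration.pointCount (ℙ F V) (⟨l, hl⟩ : Line F V) = #(points l) :=
    Nat.subtype_card _ fun p => mem_points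
  rw [hl_card, card_points_of_finrank_eq_two hl] at hcount
  exact (Nat.add_right_cancel hcount).symm

theorem exists_points_subset_of_blocking {W : Submodule F V} (hW : finrank F W = 3)
    {P : Finset (ℙ F V)} {y : ℕ}
    (hP : ∀ l ≤ W, finrank F l = 2 → (P ∩ points l).Nonempty)
    (hcard : #(P ∩ points W) = Nat.card F + y + 1) (hy : y ^ 2 < Nat.card F) :
    ∃ l ≤ W, finrank F l = 2 ∧ points l ⊆ P := by
  let := projectivePlane hW
  let incl : ℙ F W → ℙ F V := Projectivization.map W.subtype W.injective_subtype
  have hincl : Function.Injective incl := Projectivization.map_injective _ _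
  have hrange {p : ℙ F V} : p ∈ Set.range incl ↔ p.submodule ≤ W := by
    rw [range_map_subtype, Set.mem_ofPred_eq]
  let S : Finset (ℙ F W) := P.preimage incl hincl.injOn
  have hS_card : #S = Nat.card F + y + 1 := by
    rw [card_preimage, ← hcard, ← filter_mem_eq_inter]
    simp only [hrange, mem_points]
  have hS_blocks (l : Line F W) : ∃ p ∈ S, p ∈ l := by
    obtain ⟨p, hp⟩ := hP (l.1.map W.subtype) (Submodule.map_subtype_le _ _)
      ((Submodule.finrank_map_subtype_eq _ _).trans l.2)
    obtain ⟨hpP, hpl⟩ := mem_inter.1 hp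
    rw [mem_points] at hpl
    obtain ⟨p, rfl⟩ := hrange.2 (hpl.trans (Submodule.map_subtype_le _ _))
    exact ⟨p, mem_preimage.2 hpP, submodule_map_subtype_le_iff.1 hpl⟩
  rw [← order_projectivePlane hW] at hS_card hy
  obtain ⟨l, hl⟩ := exists_line_forall_mem_of_blocking hS_blocks hS_card hy
  refine ⟨l.1.map W.subtype, Submodule.map_subtype_le _ _,
    (Submodule.finrank_map_subtype_eq _ _).trans l.2, fun p hp => ?_⟩
  rw [mem_points] at hp
  obtain ⟨p, rfl⟩ := hrange.2 (hp.trans (Submodule.map_subtype_le _ _))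
  exact mem_preimage.1 (hl p (submodule_map_subtype_le_iff.1 hp))

end Blocking

section TwoIntersection

/-- The planes that meet `P` in exactly `q + x` points, where `q` is the order of the field. -/
noncomputable def heavyPlanes (P : Finset (ℙ F V)) (x : ℕ) : Finset (Submodule F V) :=
  {W : Submodule F V | finrank F W = 3 ∧ #(P ∩ points W) = Nat.card F + x}.toFinite.toFinset

/-- `P` meets every plane in `x` or `q + x` points, where `q` is the order of the field. -/
def IsTwoIntersection (P : Finset (ℙ F V)) (x : ℕ) : Prop :=
  ∀ W : Submodule F V, finrank F W = 3 →
    #(P ∩ points W) = x ∨ #(P ∩ points W) = Nat.card F + x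

variable {P : Finset (ℙ F V)} {x y : ℕ} {l W : Submodule F V}

lemma mem_heavyPlanes :
    W ∈ heavyPlanes P x ↔ finrank F W = 3 ∧ #(P ∩ points W) = Nat.card F + x := by
  simp only [heavyPlanes, Set.Finite.mem_toFinset, Set.mem_ofPred_eq]

lemma IsTwoIntersection.card_inter_plane (hP : IsTwoIntersection P x) (hW : finrank F W = 3) :
    #(P ∩ points W) = x + if W ∈ heavyPlanes P x then Nat.card F else 0 := by
  split_ifs with h
  · rw [(mem_heavyPlanes.1 h).2, add_comm]
  · exact (hP W hW).resolve_right fun hcard => h (mem_heavyPlanes.2 ⟨hW, hcard⟩)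

lemma filter_pencil_top_heavyPlanes (hV : finrank F V = 4) (hl : finrank F l = 2) :
    {W ∈ pencil l ⊤ | W ∈ heavyPlanes P x} = {W ∈ heavyPlanes P x | l ≤ W} := by
  have hrank : finrank F (⊤ : Submodule F V) = finrank F l + 2 := by rw [finrank_top, hV, hl]
  ext W
  simp only [mem_filter]
  refine ⟨fun ⟨hlW, hW⟩ => ⟨hW, (mem_pencil.1 hlW).1.le⟩, fun ⟨hW, hlW⟩ => ⟨?_, hW⟩⟩
  exact mem_pencil_of_finrank hrank hlW le_top (by rw [(mem_heavyPlanes.1 hW).1, hl])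

variable [Finite F]

lemma IsTwoIntersection.card_add_mul_card_inter_line (hV : finrank F V = 4)
    (hP : IsTwoIntersection P x) (hl : finrank F l = 2) :
    #P + Nat.card F * #(P ∩ points l) =
      x * (Nat.card F + 1) + Nat.card F * #{W ∈ heavyPlanes P x | l ≤ W} := by
  have hrank : finrank F (⊤ : Submodule F V) = finrank F l + 2 := by rw [finrank_top, hV, hl]
  calc #P + Nat.card F * #(P ∩ points l)
      = ∑ W ∈ pencil l ⊤, #(P ∩ points W) := by
        rw [sum_pencil_card_points le_top hrank, inter_points_top]
    _ = ∑ W ∈ pencil l ⊤, (x + if W ∈ heavyPlanes P x then Nat.card F else 0) :=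
        sum_congr rfl fun W hW => hP.card_inter_plane <| by
          rw [finrank_of_mem_pencil hrank hW, hl]
    _ = x * (Nat.card F + 1) + Nat.card F * #{W ∈ heavyPlanes P x | l ≤ W} := by
        rw [sum_add_distrib, ← sum_filter, sum_const, sum_const, smul_eq_mul, smul_eq_mul,
          card_pencil le_top hrank, filter_pencil_top_heavyPlanes hV hl, mul_comm x, mul_comm #_]

theorem IsTwoIntersection.card_eq_of_mem (hV : finrank F V = 4) (hP : IsTwoIntersection P x)
    {p : ℙ F V} (hp : p ∈ P)
    (hheavy : #{W ∈ heavyPlanes P x | p.submodule ≤ W} = Nat.card F + x) :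
    #P = x * (Nat.card F + 1) := by
  obtain ⟨W, hW⟩ : {W ∈ heavyPlanes P x | p.submodule ≤ W}.Nonempty :=
    card_pos.1 (hheavy ▸ Nat.add_pos_left Nat.card_pos x)
  obtain ⟨hW, hpW⟩ := mem_filter.1 hW
  obtain ⟨hWrank, hWcard⟩ := mem_heavyPlanes.1 hW
  have hrank : finrank F W = finrank F p.submodule + 2 := by rw [hWrank, p.finrank_submodule]
  have hpoints := sum_pencil_card_points hpW hrank P
  have hplanes := sum_pencil_card_hyperplanes hpW hrank (Q := heavyPlanes P x) fun U hU => by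
    rw [(mem_heavyPlanes.1 hU).1, hV]
  have hPp : P ∩ points p.submodule = {p} := by
    rw [points_submodule, inter_singleton_of_mem hp]
  have hWW : {U ∈ heavyPlanes P x | W ≤ U} = {W} := eq_singleton_iff_unique_mem.2
    ⟨mem_filter.2 ⟨hW, le_rfl⟩, fun U hU => by
      obtain ⟨hU, hWU⟩ := mem_filter.1 hU
      have hUrank := (mem_heavyPlanes.1 hU).1
      exact (Submodule.eq_of_le_of_finrank_eq hWU (hWrank.trans hUrank.symm)).symm⟩
  rw [hPp, card_singleton, hWcard] at hpoints
  rw [hWW, card_singleton, hheavy] at hplanes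
  have hsum : ∑ l ∈ pencil p.submodule W, (#P + Nat.card F * #(P ∩ points l)) =
      ∑ l ∈ pencil p.submodule W,
        (x * (Nat.card F + 1) + Nat.card F * #{U ∈ heavyPlanes P x | l ≤ U}) :=
    sum_congr rfl fun l hl => hP.card_add_mul_card_inter_line hV <| by
      rw [finrank_of_mem_pencil hrank hl, p.finrank_submodule]
  rw [sum_add_distrib, sum_add_distrib, sum_const, sum_const, ← mul_sum, ← mul_sum, hpoints,
    hplanes, Nat.add_right_cancel_iff, card_pencil hpW hrank, smul_eq_mul, smul_eq_mul] at hsum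
  exact Nat.eq_of_mul_eq_mul_left (Nat.succ_pos _) hsum

theorem IsTwoIntersection.card_inter_line (hV : finrank F V = 4) (hP : IsTwoIntersection P x)
    (hcard : #P = x * (Nat.card F + 1)) (hl : finrank F l = 2) :
    #(P ∩ points l) = #{W ∈ heavyPlanes P x | l ≤ W} := by
  have h := hP.card_add_mul_card_inter_line hV hl
  rw [hcard] at h
  exact Nat.eq_of_mul_eq_mul_left Nat.card_pos (Nat.add_left_cancel h)

lemma IsTwoIntersection.heavyPlanes_nonempty (hV : finrank F V = 4) (hP : IsTwoIntersection P x)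
    (hcard : #P = x * (Nat.card F + 1)) (hne : P.Nonempty) : (heavyPlanes P x).Nonempty := by
  have : FiniteDimensional F V := .of_finrank_pos (by omega)
  obtain ⟨p, hp⟩ := hne
  obtain ⟨l, hpl, hl⟩ := exists_le_finrank_eq (A := p.submodule) (n := 2)
    (by rw [p.finrank_submodule]; omega) (by omega)
  have hpos : 0 < #{W ∈ heavyPlanes P x | l ≤ W} :=
    hP.card_inter_line hV hcard hl ▸ card_pos.2 ⟨p, mem_inter.2 ⟨hp, mem_points.2 hpl⟩⟩
  exact (card_pos.1 hpos).mono (filter_subset _ _)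

theorem IsTwoIntersection.exists_points_subset (hV : finrank F V = 4)
    (hP : IsTwoIntersection P (y + 1)) (hcard : #P = (y + 1) * (Nat.card F + 1))
    (hy : y ^ 2 < Nat.card F) : ∃ l : Submodule F V, finrank F l = 2 ∧ points l ⊆ P := by
  have hne : P.Nonempty := card_pos.1 (hcard ▸ by positivity)
  obtain ⟨W, hW⟩ := hP.heavyPlanes_nonempty hV hcard hne
  obtain ⟨hWrank, hWcard⟩ := mem_heavyPlanes.1 hW
  obtain ⟨l, -, hl⟩ := exists_points_subset_of_blocking hWrank
    (fun l hlW hl => card_pos.1 <| hP.card_inter_line hV hcard hl ▸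
      card_pos.2 ⟨W, mem_filter.2 ⟨hW, hlW⟩⟩) hWcard hy
  exact ⟨l, hl⟩

lemma IsTwoIntersection.mem_heavyPlanes_of_le (hV : finrank F V = 4) (hP : IsTwoIntersection P x)
    (hcard : #P = x * (Nat.card F + 1)) (hl : finrank F l = 2) (hlP : points l ⊆ P)
    (hW : finrank F W = 3) (hlW : l ≤ W) : W ∈ heavyPlanes P x := by
  have hrank : finrank F (⊤ : Submodule F V) = finrank F l + 2 := by rw [finrank_top, hV, hl]
  have hall : {W ∈ pencil l ⊤ | W ∈ heavyPlanes P x} = pencil l ⊤ := by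
    refine eq_of_subset_of_card_le (filter_subset _ _) ?_
    rw [filter_pencil_top_heavyPlanes hV hl, ← hP.card_inter_line hV hcard hl,
      inter_eq_right.2 hlP, card_points_of_finrank_eq_two hl, card_pencil le_top hrank]
  exact (filter_eq_self.1 hall) W (mem_pencil_of_finrank hrank hlW le_top (by rw [hW, hl]))

lemma card_points_inter_plane (hV : finrank F V = 4) (hl : finrank F l = 2)
    (hW : finrank F W = 3) :
    #(points l ∩ points W) = 1 + if l ≤ W then Nat.card F else 0 := by
  rw [← points_inf]
  split_ifs with hlW
  · rw [inf_of_le_left hlW, card_points_of_finrank_eq_two hl, add_comm]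
  · have hinf := finrank_inf_add_one (by rw [hW, hV]) hlW
    exact card_points_of_finrank_eq_one (by omega)

lemma card_inter_plane_eq_card_sdiff_line_inter_plane (hV : finrank F V = 4)
    (hl : finrank F l = 2) (hlP : points l ⊆ P) (hW : finrank F W = 3) :
    #(P ∩ points W) = #((P \ points l) ∩ points W) + (1 + if l ≤ W then Nat.card F else 0) := by
  rw [← card_points_inter_plane hV hl hW, sdiff_inter_right_comm,
    ← card_sdiff_add_card_inter (P ∩ points W) (points l), inter_right_comm,
    inter_eq_right.2 hlP]

theorem IsTwoIntersection.sdiff_line (hV : finrank F V = 4) (hP : IsTwoIntersection P (y + 1))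
    (hcard : #P = (y + 1) * (Nat.card F + 1)) (hl : finrank F l = 2) (hlP : points l ⊆ P) :
    IsTwoIntersection (P \ points l) y := by
  intro W hW
  have := card_inter_plane_eq_card_sdiff_line_inter_plane hV hl hlP hW
  split_ifs at this with hlW
  · have := (mem_heavyPlanes.1 (hP.mem_heavyPlanes_of_le hV hcard hl hlP hW hlW)).2
    omega
  · have := hP W hW
    omega

lemma IsTwoIntersection.mem_heavyPlanes_iff (hV : finrank F V = 4)
    (hP : IsTwoIntersection P (y + 1)) (hcard : #P = (y + 1) * (Nat.card F + 1))
    (hl : finrank F l = 2) (hlP : points l ⊆ P) (hW : finrank F W = 3) :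
    W ∈ heavyPlanes P (y + 1) ↔ l ≤ W ∨ W ∈ heavyPlanes (P \ points l) y := by
  by_cases hlW : l ≤ W
  · exact iff_of_true (hP.mem_heavyPlanes_of_le hV hcard hl hlP hW hlW) (.inl hlW)
  · have := card_inter_plane_eq_card_sdiff_line_inter_plane hV hl hlP hW
    rw [if_neg hlW] at this
    simp only [mem_heavyPlanes, hW, hlW, this, true_and, false_or]
    omega

theorem IsTwoIntersection.exists_disjoint_lines (hV : finrank F V = 4)
    (hxq : (x - 1) ^ 2 < Nat.card F)
    (hP : IsTwoIntersection P x) (hcard : #P = x * (Nat.card F + 1)) :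
    ∃ ℓ : Fin x → Submodule F V,
      (∀ i, finrank F (ℓ i) = 2) ∧
      (∀ i j, i ≠ j → ℓ i ⊓ ℓ j = ⊥) ∧
      (∀ p, p ∈ P ↔ ∃ i, p.submodule ≤ ℓ i) ∧
      ∀ W, W ∈ heavyPlanes P x ↔ finrank F W = 3 ∧ ∃ i, ℓ i ≤ W := by
  induction x generalizing P with
  | zero =>
    obtain rfl : P = ∅ := card_eq_zero.1 (hcard.trans (zero_mul _))
    have hq : Nat.card F ≠ 0 := Nat.card_pos.ne'
    exact ⟨Fin.elim0, fun i => i.elim0, fun i => i.elim0, by simp,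
      by simp [mem_heavyPlanes, hq.symm]⟩
  | succ y ih =>
    rw [Nat.add_sub_cancel] at hxq
    obtain ⟨l, hl, hlP⟩ := hP.exists_points_subset hV hcard hxq
    have hcard' : #(P \ points l) = y * (Nat.card F + 1) := by
      rw [card_sdiff_of_subset hlP, hcard, card_points_of_finrank_eq_two hl, Nat.succ_mul,
        Nat.add_sub_cancel]
    have hyq : (y - 1) ^ 2 < Nat.card F := (Nat.pow_le_pow_left (Nat.sub_le y 1) 2).trans_lt hxq
    obtain ⟨ℓ, hℓ, hdisj, hpoints, hplanes⟩ := ih hyq (hP.sdiff_line hV hcard hl hlP) hcard'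
    have hlℓ (i) : l ⊓ ℓ i = ⊥ := inf_eq_bot_of_disjoint_points <|
      disjoint_sdiff.mono_right fun p hp => (hpoints p).2 ⟨i, mem_points.1 hp⟩
    refine ⟨Fin.cons l ℓ, Fin.cases hl hℓ, ?_, fun p => ?_, fun W => ?_⟩
    · refine Fin.cases (Fin.cases (absurd rfl) fun j _ => hlℓ j) fun i => ?_
      refine Fin.cases (fun _ => inf_comm l (ℓ i) ▸ hlℓ i) fun j hij => ?_
      exact hdisj i j fun h => hij (congrArg Fin.succ h)
    · have hlp : p.submodule ≤ l → p ∈ P := fun h => hlP (mem_points.2 h)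
      simp only [Fin.exists_fin_succ, Fin.cons_zero, Fin.cons_succ, ← hpoints, mem_sdiff,
        mem_points]
      tauto
    · simp only [Fin.exists_fin_succ, Fin.cons_zero, Fin.cons_succ, and_or_left, ← hplanes]
      by_cases hW : finrank F W = 3
      · rw [hP.mem_heavyPlanes_iff hV hcard hl hlP hW]
        tauto
      · simp only [mem_heavyPlanes, hW, false_and, or_self]

end TwoIntersection

section Sets

lemma ncard_sep_submodule_le (P : Finset (ℙ F V)) (W : Submodule F V) :
    {p ∈ (P : Set (ℙ F V)) | p.submodule ≤ W}.ncard = #(P ∩ points W) := by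
  rw [← Set.ncard_coe_finset, ← filter_mem_eq_inter, coe_filter]
  simp only [mem_points, mem_coe]

lemma coe_heavyPlanes (P : Finset (ℙ F V)) (x : ℕ) :
    (heavyPlanes P x : Set (Submodule F V)) = {W : Submodule F V | finrank F W = 3 ∧
      {p ∈ (P : Set (ℙ F V)) | p.submodule ≤ W}.ncard = Nat.card F + x} := by
  ext W
  rw [mem_coe, mem_heavyPlanes, ← ncard_sep_submodule_le, Set.mem_ofPred_eq]

end Sets

end Counting

theorem ncard_eq_of_propertyX {F : Type*} [Field F] [Finite F] {x : ℕ} {P₀ : Set (ℙ F (Fin 4 → F))}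
    {P₂ : Set (Submodule F (Fin 4 → F))} (h : PropertyX F (Nat.card F) x P₀ P₂) :
    P₀.ncard = x * (Nat.card F + 1) := by
  have hV : finrank F (Fin 4 → F) = 4 := finrank_fin_fun F
  obtain ⟨hplane, hP₂, -, hP₀⟩ := h
  lift P₀ to Finset (ℙ F (Fin 4 → F)) using Set.toFinite _
  simp only [ncard_sep_submodule_le] at hplane hP₂
  obtain rfl | ⟨p, hp⟩ := P₀.eq_empty_or_nonempty
  · obtain ⟨W, -, hW⟩ := exists_le_finrank_eq (F := F) (A := (⊥ : Submodule F (Fin 4 → F)))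
      (n := 3) (by simp) (by omega)
    have hq : 0 < Nat.card F := Nat.card_pos
    have hx : x = 0 := by
      have := hplane W hW
      rw [empty_inter, card_empty] at this
      omega
    rw [hx, coe_empty, Set.ncard_empty, zero_mul]
  · obtain rfl : P₂ = heavyPlanes P₀ x := Set.ext fun W => by rw [hP₂, mem_coe, mem_heavyPlanes]
    rw [Set.ncard_coe_finset]
    refine IsTwoIntersection.card_eq_of_mem hV hplane hp ?_
    rw [← (hP₀ p).1 hp, ← Set.ncard_coe_finset, coe_filter]
    simp only [mem_coe]

end CameronLiebler

open CameronLiebler in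
theorem stmt_19_general {F V : Type*} [Field F] [Finite F] [AddCommGroup V] [Module F V]
    (hV : Module.finrank F V = 4) {x : ℕ} (hxq : (x - 1) ^ 2 < Nat.card F)
    {P : Set (Projectivization F V)} (hcard : P.ncard = x * (Nat.card F + 1))
    (hplane : ∀ W : Submodule F V, Module.finrank F W = 3 →
      {p ∈ P | p.submodule ≤ W}.ncard = x ∨ {p ∈ P | p.submodule ≤ W}.ncard = Nat.card F + x) :
    ∃ ℓ : Fin x → Submodule F V,
      (∀ i, Module.finrank F (ℓ i) = 2) ∧
      (∀ i j, i ≠ j → ℓ i ⊓ ℓ j = ⊥) ∧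
      P = {p : Projectivization F V | ∃ i, p.submodule ≤ ℓ i} ∧
      {W : Submodule F V | Module.finrank F W = 3 ∧
          {p ∈ P | p.submodule ≤ W}.ncard = Nat.card F + x} =
        {W : Submodule F V | Module.finrank F W = 3 ∧ ∃ i, ℓ i ≤ W} := by
  have : FiniteDimensional F V := .of_finrank_pos (by omega)
  have : Finite V := Module.finite_of_finite F
  lift P to Finset (Projectivization F V) using Set.toFinite _
  rw [Set.ncard_coe_finset] at hcard
  simp only [ncard_sep_submodule_le] at hplane
  obtain ⟨ℓ, hℓ, hdisj, hpoints, hplanes⟩ :=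
    IsTwoIntersection.exists_disjoint_lines hV hxq hplane hcard
  exact ⟨ℓ, hℓ, hdisj, Set.ext hpoints, coe_heavyPlanes P x ▸ Set.ext hplanes⟩

/-- Let x ≥ 1 with (x−1)² < q, and let (P₀, P₂) satisfy Property(x) in PG(3,q).
Then there exist x pairwise disjoint lines ℓ₁, …, ℓ_x of PG(3,q) such that P₀
is exactly the set of points lying on at least one of the lines and P₂ is
exactly the set of planes containing at least one of the lines. (Under the
Klein correspondence: every Cameron–Liebler set of generators of the Klein
quadric Q⁺(5,q) with parameter x < √q + 1 is a union of x point-pencils with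
pairwise non-collinear vertices.) -/
theorem stmt_19 (F : Type*) [Field F] [Fintype F] (q : ℕ) (hq : q = Fintype.card F)
    (x : ℕ) (hx : 1 ≤ x) (hxq : (x - 1) ^ 2 < q)
    (P0 : Set (Projectivization F (Fin 4 → F)))
    (P2 : Set (Submodule F (Fin 4 → F)))
    (hprop : PropertyX F q x P0 P2) :
    ∃ ℓ : Fin x → Submodule F (Fin 4 → F),
      (∀ i, Module.finrank F (ℓ i) = 2) ∧
      (∀ i j, i ≠ j → ℓ i ⊓ ℓ j = ⊥) ∧
      P0 = {p : Projectivization F (Fin 4 → F) | ∃ i, p.submodule ≤ ℓ i} ∧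
      P2 = {W : Submodule F (Fin 4 → F) | Module.finrank F W = 3 ∧ ∃ i, ℓ i ≤ W} := by
  rw [Fintype.card_eq_nat_card] at hq
  subst hq
  have hP2 : P2 = {W : Submodule F (Fin 4 → F) | Module.finrank F W = 3 ∧
      {p ∈ P0 | p.submodule ≤ W}.ncard = Nat.card F + x} := Set.ext hprop.2.1
  exact hP2 ▸ stmt_19_general (Module.finrank_fin_fun F) hxq
    (CameronLiebler.ncard_eq_of_propertyX hprop) hprop.1
end
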